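/- (Tverberg theorem for boundaries of convex polytopes.) Let r be a power of a prime and d ≥ 1. Then the boundary complex of any convex polytope of dimension (d+1)(r−1) admits no almost r-embedding into ℝ^d; that is, for every continuous map f from the boundary of the polytope to ℝ^d there exist pairwise disjoint proper faces σ_1, …, σ_r of the polytope with f(σ_1) ∩ … ∩ f(σ_r) ≠ ∅. -/

import Mathlib

namespace TVB
open scoped BigOperators

section Nil
variable {K V : Type*} [Field K] [AddCommGroup V] [Module K V]

theorem D_pow (t D Γ : Module.End K V) (h1 : D * t = t * D + Γ) (h2 : Γ * t = t * Γ) (m : ℕ) :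
    D * t ^ (m + 1) = t ^ (m + 1) * D + ((m + 1 : ℕ) : K) • (Γ * t ^ m) := by
  induction m with
  | zero => simp [h1]
  | succ m ih =>
    have h3 : Γ * t ^ (m+1) = t ^ (m+1) * Γ := (Commute.pow_right (show Commute Γ t from h2) _)
    rw [pow_succ t (m+1), ← mul_assoc, ih, add_mul, mul_assoc _ D t, h1, mul_add, smul_mul_assoc,
      mul_assoc Γ, ← pow_succ, ← mul_assoc, h3]
    push_cast
    module

theorem ker_le_im (p : ℕ) [Fact p.Prime] [CharP K p] (t D Γ Γ' : Module.End K V)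
    (h1 : D * t = t * D + Γ) (h2 : Γ * t = t * Γ) (h3 : Γ' * Γ = 1) (h4 : Γ * Γ' = 1)
    (e : ℕ) (he : e < p) (y : V) (hy : (t ^ e) y = 0) : ∃ z, y = t z := by
  have h5 : Γ' * t = t * Γ' := by
    calc Γ' * t = Γ' * t * (Γ * Γ') := by rw [h4, mul_one]
      _ = Γ' * (t * Γ) * Γ' := by noncomm_ring
      _ = (Γ' * Γ) * t * Γ' := by rw [← h2]; noncomm_ring
      _ = _ := by rw [h3, one_mul]
  induction e generalizing y with
  | zero => exact ⟨0, by simpa using hy⟩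
  | succ m ih =>
    have hne : ((m + 1 : ℕ) : K) ≠ 0 := by
      intro h
      rw [CharP.cast_eq_zero_iff K p] at h
      exact absurd (Nat.le_of_dvd (by omega) h) (by omega)
    have hD := congrArg (fun f : Module.End K V => f y) (D_pow t D Γ h1 h2 m)
    simp only [Module.End.mul_apply, LinearMap.add_apply, LinearMap.smul_apply, hy, map_zero] at hD
    -- t^m y = t^(m+1) y'
    set y' := -(((m + 1 : ℕ) : K)⁻¹ • Γ' (D y)) with hy'
    have h6 : Γ' * t ^ (m+1) = t ^ (m+1) * Γ' :=
      (Commute.pow_right (show Commute Γ' t from h5) _)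
    have h7 : (t ^ m) y = (t ^ (m+1)) y' := by
      have := congrArg Γ' hD
      rw [map_add, map_zero, map_smul] at this
      have e1 : Γ' (Γ ((t ^ m) y)) = (t^m) y := by
        rw [← Module.End.mul_apply, h3]; rfl
      have e2 : Γ' ((t ^ (m+1)) (D y)) = (t ^ (m+1)) (Γ' (D y)) := by
        rw [← Module.End.mul_apply, h6]; rfl
      rw [e1, e2] at this
      rw [hy', map_neg, map_smul]
      have h8 : (t ^ (m + 1)) (Γ' (D y)) = -(((m + 1 : ℕ) : K) • (t ^ m) y) :=
        eq_neg_of_add_eq_zero_left this.symm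
      rw [h8, smul_neg, neg_neg, smul_smul, inv_mul_cancel₀ hne, one_smul]
    obtain ⟨z, hz⟩ := ih (by omega) (y - t y') (by
      rw [map_sub, h7, pow_succ, Module.End.mul_apply, sub_self])
    exact ⟨z + y', by rw [map_add, ← hz]; abel⟩

theorem ker_le_im' (p : ℕ) [Fact p.Prime] [CharP K p] (t D Γ Γ' : Module.End K V)
    (h1 : D * t = t * D + Γ) (h2 : Γ * t = t * Γ) (h3 : Γ' * Γ = 1) (h4 : Γ * Γ' = 1)
    (e : ℕ) (y : V) (hy : (t ^ e) y = 0) (m : ℕ) (hm : m + e ≤ p) : ∃ z, y = (t ^ m) z := by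
  induction m with
  | zero => exact ⟨y, by simp⟩
  | succ m ih =>
    obtain ⟨z, hz⟩ := ih (by omega)
    obtain ⟨z', hz'⟩ := ker_le_im p t D Γ Γ' h1 h2 h3 h4 (e + m) (by omega) z (by
      rw [pow_add, Module.End.mul_apply, ← hz, hy])
    exact ⟨z', by rw [hz, hz', pow_succ, Module.End.mul_apply]⟩
end Nil

section Ext
variable {K L : Type*} [Field K]

/-- the wedge of a list of labels -/
noncomputable def wedge (K : Type*) [Field K] {L : Type*} (l : List L) :
    ExteriorAlgebra K (L →₀ K) :=
  (l.map fun v => ExteriorAlgebra.ι K (Finsupp.single v (1:K))).prod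

@[simp] theorem wedge_nil : wedge K ([] : List L) = 1 := rfl
@[simp] theorem wedge_cons (a : L) (l : List L) :
    wedge K (a :: l) = ExteriorAlgebra.ι K (Finsupp.single a (1:K)) * wedge K l := by
  simp [wedge]

theorem wedge_eq_zero (l : List L) (h : ¬ l.Nodup) : wedge K l = 0 := by
  classical
  have h1 : wedge K l = ExteriorAlgebra.ιMulti K l.length
      (fun i => Finsupp.single (l.get i) (1:K)) := by
    rw [ExteriorAlgebra.ιMulti_apply, wedge]
    congr 1
    conv_lhs => rw [← List.ofFn_get l, List.map_ofFn]
    rfl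
  rw [h1]
  rw [List.nodup_iff_injective_get, Function.Injective] at h
  push Not at h
  obtain ⟨i, j, hij, hne⟩ := h
  exact AlternatingMap.map_eq_zero_of_eq _ _ (by rw [hij]) hne

/-- augmentation -/
noncomputable def eps (K : Type*) [Field K] (L : Type*) : Module.Dual K (L →₀ K) :=
  Finsupp.linearCombination K (fun _ => (1:K))

/-- boundary -/
noncomputable def bdE (K : Type*) [Field K] (L : Type*) :
    ExteriorAlgebra K (L →₀ K) →ₗ[K] ExteriorAlgebra K (L →₀ K) :=
  CliffordAlgebra.contractLeft (eps K L)

theorem bdE_one : bdE K L 1 = 0 := CliffordAlgebra.contractLeft_one _ _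

theorem bdE_cons (a : L) (x : ExteriorAlgebra K (L →₀ K)) :
    bdE K L (ExteriorAlgebra.ι K (Finsupp.single a (1:K)) * x)
      = x - ExteriorAlgebra.ι K (Finsupp.single a (1:K)) * bdE K L x := by
  rw [bdE]
  erw [CliffordAlgebra.contractLeft_ι_mul]
  simp [eps]

/-- diagonal derivation -/
noncomputable def der [Fintype L] (φ : L → K) :
    ExteriorAlgebra K (L →₀ K) →ₗ[K] ExteriorAlgebra K (L →₀ K) :=
  ∑ v, φ v • (LinearMap.mulLeft K (ExteriorAlgebra.ι K (Finsupp.single v (1:K))) ∘ₗ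
    CliffordAlgebra.contractLeft (Finsupp.lapply (R := K) (M := K) v))

theorem der_wedge [Fintype L] (φ : L → K) (l : List L) :
    der φ (wedge K l) = (l.map φ).sum • wedge K l := by
  classical
  induction l with
  | nil =>
    simp only [der, wedge_nil, LinearMap.sum_apply, LinearMap.smul_apply, LinearMap.comp_apply]
    simp only [List.map_nil, List.sum_nil, zero_smul]
    apply Finset.sum_eq_zero
    intro v _
    erw [CliffordAlgebra.contractLeft_one]
    simp
  | cons a l ih =>
    simp only [wedge_cons, List.map_cons, List.sum_cons, add_smul]
    have key : ∀ v, LinearMap.mulLeft K (ExteriorAlgebra.ι K (Finsupp.single v (1:K)))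
      (CliffordAlgebra.contractLeft (Finsupp.lapply (R := K) (M := K) v)
        (ExteriorAlgebra.ι K (Finsupp.single a (1:K)) * wedge K l)) =
        (if v = a then ExteriorAlgebra.ι K (Finsupp.single v (1:K)) * wedge K l else 0) +
        ExteriorAlgebra.ι K (Finsupp.single a (1:K)) *
          LinearMap.mulLeft K (ExteriorAlgebra.ι K (Finsupp.single v (1:K)))
            (CliffordAlgebra.contractLeft (Finsupp.lapply (R := K) (M := K) v) (wedge K l)) := by
      intro v
      erw [CliffordAlgebra.contractLeft_ι_mul]
      have hsw := ExteriorAlgebra.ι_add_mul_swap (R := K) (Finsupp.single v (1:K)) (Finsupp.single a (1:K))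
      set c := (CliffordAlgebra.contractLeft (Finsupp.lapply (R := K) (M := K) v) (wedge K l))
      have e : (Finsupp.lapply (R := K) (M := K) v) (Finsupp.single a (1:K)) = if v = a then 1 else 0 := by
        simp [Finsupp.single_apply, eq_comm]
      rw [e]
      change ExteriorAlgebra.ι K (Finsupp.single v (1:K)) * (_ - ExteriorAlgebra.ι K (Finsupp.single a (1:K)) * c) = _ + ExteriorAlgebra.ι K (Finsupp.single a (1:K)) * (ExteriorAlgebra.ι K (Finsupp.single v (1:K)) * c)
      rw [mul_sub, ← mul_assoc, ← mul_assoc, eq_neg_of_add_eq_zero_left hsw]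
      split_ifs <;> simp
    simp only [der, LinearMap.sum_apply, LinearMap.smul_apply, LinearMap.comp_apply] at ih ⊢
    rw [Finset.sum_congr rfl (fun v _ => by rw [key v, smul_add]), Finset.sum_add_distrib]
    congr 1
    · simp
    · rw [← mul_smul_comm, ← ih, Finset.mul_sum]
      simp only [mul_smul_comm]

end Ext
end TVB

namespace TVB
open scoped BigOperators
section Act
variable {K L G κ ι : Type*} [Field K] [CommGroup G] [MulAction G L]

/-- the group acting on the exterior algebra -/
noncomputable def repE (K L G : Type*) [Field K] [CommGroup G] [MulAction G L] :
    G →* Module.End K (ExteriorAlgebra K (L →₀ K)) where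
  toFun g := (ExteriorAlgebra.map (Finsupp.lmapDomain K K (fun v : L => g • v))).toLinearMap
  map_one' := by
    have : (Finsupp.lmapDomain K K (fun v : L => (1:G) • v)) = LinearMap.id := by
      ext; simp
    rw [this, ExteriorAlgebra.map_id]; rfl
  map_mul' g h := by
    have : (Finsupp.lmapDomain K K (fun v : L => (g * h) • v)) =
      (Finsupp.lmapDomain K K (fun v : L => g • v)) ∘ₗ (Finsupp.lmapDomain K K (fun v : L => h • v)) := by
      ext; simp [mul_smul]
    rw [this, ← ExteriorAlgebra.map_comp_map]; rfl

theorem repE_mul (g : G) (x y : ExteriorAlgebra K (L →₀ K)) :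
    repE K L G g (x * y) = repE K L G g x * repE K L G g y := by
  simp [repE]

theorem repE_one (g : G) : repE K L G g (1 : ExteriorAlgebra K (L →₀ K)) = 1 := by
  simp [repE]

theorem repE_ι (g : G) (v : L) :
    repE K L G g (ExteriorAlgebra.ι K (Finsupp.single v (1:K)))
      = ExteriorAlgebra.ι K (Finsupp.single (g • v) (1:K)) := by
  simp [repE]

theorem repE_wedge (g : G) (l : List L) :
    repE K L G g (wedge K l) = wedge K (l.map (g • ·)) := by
  induction l with
  | nil => simp [repE_one]
  | cons a l ih => simp [repE_mul, repE_ι, ih]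

theorem bdE_repE_wedge (g : G) (l : List L) :
    bdE K L (repE K L G g (wedge K l)) = repE K L G g (bdE K L (wedge K l)) := by
  induction l with
  | nil => simp [repE_one, bdE_one]
  | cons a l ih =>
    rw [wedge_cons, repE_mul, repE_ι, bdE_cons, bdE_cons, map_sub, ih, repE_mul, repE_ι]

/-- the group ring acting -/
noncomputable def RE (K L G : Type*) [Field K] [CommGroup G] [MulAction G L] :
    MonoidAlgebra K G →ₐ[K] Module.End K (ExteriorAlgebra K (L →₀ K)) :=
  MonoidAlgebra.lift K _ G (repE K L G)

theorem RE_of (g : G) : RE K L G (MonoidAlgebra.of K G g) = repE K L G g := by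
  simp [RE]

/-- colourful wedges -/
noncomputable def TT (K : Type*) [Field K] {L κ : Type*} (col : L → κ) (n : ℕ) :
    Submodule K (ExteriorAlgebra K (L →₀ K)) :=
  Submodule.span K {x | ∃ l : List L, l.length = n ∧ (l.map col).Nodup ∧ x = wedge K l}

theorem wedge_mem_TT (col : L → κ) (l : List L)
    (h : ∀ a ∈ l, ∀ b ∈ l, col a = col b → a = b) : wedge K l ∈ TT K col l.length := by
  by_cases hl : l.Nodup
  · exact Submodule.subset_span ⟨l, rfl, List.Nodup.map_on h hl, rfl⟩
  · rw [wedge_eq_zero _ hl]; exact Submodule.zero_mem _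

theorem TT_zero [Fintype κ] (col : L → κ) (n : ℕ) (h : Fintype.card κ < n) :
    TT K col n = ⊥ := by
  rw [TT, Submodule.span_eq_bot]
  rintro x ⟨l, hl, hn, -⟩
  have := hn.length_le_card
  simp at this
  omega

theorem bdE_TT (col : L → κ) (n : ℕ) (x) (hx : x ∈ TT K col (n+1)) : bdE K L x ∈ TT K col n := by
  -- first a bound for a list
  have key : ∀ (l : List L) (pre : List L), (( pre ++ l).map col).Nodup →
      wedge K pre * bdE K L (wedge K l) ∈ TT K col (pre.length + l.length - 1) := by
    intro l
    induction l with
    | nil => intro pre _; simp [bdE_one]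
    | cons a l ih =>
      intro pre hn
      rw [wedge_cons, bdE_cons, mul_sub]
      apply Submodule.sub_mem
      · apply Submodule.subset_span
        refine ⟨pre ++ l, by simp, ?_, by simp [wedge]⟩
        refine hn.sublist (List.Sublist.map _ ?_)
        exact List.Sublist.append_left (List.sublist_cons_self a l) pre
      · rw [← mul_assoc]
        have := ih (pre ++ [a]) (by simpa using hn)
        have e : wedge K (pre ++ [a]) = wedge K pre * ExteriorAlgebra.ι K (Finsupp.single a (1:K)) := by
          simp [wedge]
        rw [e] at this
        convert this using 2
        simp
  induction hx using Submodule.span_induction with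
  | mem x h =>
    obtain ⟨l, hl, hn, rfl⟩ := h
    have := key l [] (by simpa using hn)
    simpa [hl] using this
  | zero => simp
  | add x y _ _ hx hy => rw [map_add]; exact Submodule.add_mem _ hx hy
  | smul a x _ hx => rw [map_smul]; exact Submodule.smul_mem _ _ hx

theorem RE_span {P : MonoidAlgebra K G → Prop} (h0 : P 0) (ha : ∀ x y, P x → P y → P (x+y))
    (hs : ∀ (a : K) x, P x → P (a • x)) (ho : ∀ g, P (MonoidAlgebra.of K G g)) (x) : P x := by
  induction x using MonoidAlgebra.induction_on with
  | of g => exact ho g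
  | add x y hx hy => exact ha x y hx hy
  | smul a x hx => exact hs a x hx

theorem RE_TT (col : L → κ) (hcol : ∀ (g : G) v, col (g • v) = col v) (n : ℕ)
    (a : MonoidAlgebra K G) (x) (hx : x ∈ TT K col n) : RE K L G a x ∈ TT K col n := by
  induction a using RE_span with
  | h0 => simp
  | ha a b h1 h2 => rw [map_add]; exact Submodule.add_mem _ h1 h2
  | hs c a h => rw [map_smul]; exact Submodule.smul_mem _ _ h
  | ho g =>
    rw [RE_of]
    induction hx using Submodule.span_induction with
    | mem x h =>
      obtain ⟨l, hl, hn, rfl⟩ := h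
      rw [repE_wedge]
      refine Submodule.subset_span ⟨_, by simpa using hl, ?_, rfl⟩
      simpa [Function.comp_def, hcol] using hn
    | zero => simp
    | add x y _ _ hx hy => rw [map_add]; exact Submodule.add_mem _ hx hy
    | smul a x _ hx => rw [map_smul]; exact Submodule.smul_mem _ _ hx

theorem bdE_RE (col : L → κ) (n : ℕ)
    (a : MonoidAlgebra K G) (x) (hx : x ∈ TT K col n) :
    bdE K L (RE K L G a x) = RE K L G a (bdE K L x) := by
  induction a using RE_span with
  | h0 => simp
  | ha a b h1 h2 => simp [map_add, h1, h2]
  | hs c a h => simp [h]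
  | ho g =>
    rw [RE_of]
    induction hx using Submodule.span_induction with
    | mem x h =>
      obtain ⟨l, hl, hn, rfl⟩ := h
      exact bdE_repE_wedge g l
    | zero => simp
    | add x y _ _ hx hy => simp [map_add, hx, hy]
    | smul a x _ hx => simp [hx]

variable [Fintype ι]

/-- the nilpotent element -/
noncomputable def tt (α : ι → K) (e : ι → G) : MonoidAlgebra K G :=
  ∑ i, α i • (MonoidAlgebra.of K G (e i) - 1)

theorem sum_of_pow (p : ℕ) [Fact p.Prime] [CharP K p] (hG : ∀ g : G, g ^ p = 1) (a : ι → K)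
    (e : ι → G) : (∑ i, a i • MonoidAlgebra.of K G (e i)) ^ p
      = algebraMap K _ ((∑ i, a i) ^ p) := by
  have : CharP (MonoidAlgebra K G) p := charP_of_injective_algebraMap
    (algebraMap K (MonoidAlgebra K G)).injective p
  rw [sum_pow_char, sum_pow_char, map_sum]
  refine Finset.sum_congr rfl fun i _ => ?_
  rw [smul_pow, ← map_pow, hG, map_one, Algebra.algebraMap_eq_smul_one]

theorem tt_pow (p : ℕ) [Fact p.Prime] [CharP K p] (hG : ∀ g : G, g ^ p = 1) (α : ι → K)
    (e : ι → G) : tt α e ^ p = 0 := by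
  have : CharP (MonoidAlgebra K G) p := charP_of_injective_algebraMap
    (algebraMap K (MonoidAlgebra K G)).injective p
  rw [tt, sum_pow_char]
  refine Finset.sum_eq_zero fun i _ => ?_
  rw [smul_pow, sub_pow_char, ← map_pow, hG, map_one, one_pow, sub_self, smul_zero]

end Act
end TVB

namespace TVB
open scoped BigOperators
section Main
variable {K L G κ ι : Type*} [Field K] [CommGroup G] [MulAction G L] [Fintype ι]

variable {p : ℕ}

/-- the weight functional of a list -/
def wt (ζ : ZMod p →+* K) (ω : κ → K) (col : L → κ) (χ : L → ι → ZMod p) (l : List L) (i : ι) : K :=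
  (l.map fun v => ω (col v) * ζ (χ v i)).sum

/-- the unit attached to a list -/
noncomputable def gam (α : ι → K) (e : ι → G) (b : ι → K) : MonoidAlgebra K G :=
  ∑ i, (α i * b i) • MonoidAlgebra.of K G (e i)

theorem wt_ne [Fintype κ] [DecidableEq κ] (ζ : ZMod p →+* K) (α : ι → K) (ω : κ → K) (col : L → κ)
    (χ : L → ι → ZMod p)
    (hne : ∀ v, χ v ≠ 0)
    (hind : ∀ a : ι → κ → ZMod p, a ≠ 0 → ∑ i, ∑ c, ζ (a i c) * (α i * ω c) ≠ 0)
    (l : List L) (hl : l ≠ []) (hn : (l.map col).Nodup) :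
    ∑ i, α i * wt ζ ω col χ l i ≠ 0 := by
  let a : ι → κ → ZMod p := fun i c => (l.map fun v => if col v = c then χ v i else 0).sum
  have e : ∑ i, α i * wt ζ ω col χ l i = ∑ i, ∑ c, ζ (a i c) * (α i * ω c) := by
    refine Finset.sum_congr rfl fun i _ => ?_
    simp only [a, wt]
    clear hl hn
    induction l with
    | nil => simp
    | cons v l ih =>
      simp only [List.map_cons, List.sum_cons, map_add, mul_add, add_mul, Finset.sum_add_distrib, ← ih]
      congr 1
      rw [Finset.sum_eq_single (col v)]
      · simp; ring
      · intro b _ hb; simp [hb.symm]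
      · simp
  rw [e]
  apply hind
  obtain ⟨v, l', rfl⟩ := List.exists_cons_of_ne_nil hl
  obtain ⟨i, hi⟩ := Function.ne_iff.mp (hne v)
  intro h
  apply hi
  have h2 := congrFun (congrFun h i) (col v)
  simp only [a, List.map_cons, List.sum_cons, if_true] at h2
  have : (l'.map fun w => if col w = col v then χ w i else 0).sum = 0 := by
    apply List.sum_eq_zero
    intro x hx
    obtain ⟨w, hw, rfl⟩ := List.mem_map.mp hx
    rw [if_neg]
    intro hc
    simp only [List.map_cons, List.nodup_cons] at hn
    exact hn.1 (hc ▸ List.mem_map_of_mem hw)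
  rw [this, add_zero] at h2
  simpa using h2

theorem TT_exact [Fintype K] [Fact p.Prime] [CharP K p] (hG : ∀ g : G, g ^ p = 1) [Fintype L]
    [Fintype κ] [DecidableEq κ] (ζ : ZMod p →+* K) (α : ι → K) (e : ι → G) (ω : κ → K) (col : L → κ)
    (hcol : ∀ (g : G) v, col (g • v) = col v) (χ : L → ι → ZMod p)
    (hχ : ∀ (g : G) v, χ (g • v) = χ v) (φ : L → ZMod p)
    (hφ : ∀ i v, φ (e i • v) = φ v + χ v i) (hne : ∀ v, χ v ≠ 0)
    (hind : ∀ a : ι → κ → ZMod p, a ≠ 0 → ∑ i, ∑ c, ζ (a i c) * (α i * ω c) ≠ 0)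
    (n : ℕ) (m m' : ℕ) (hm : m' + m ≤ p) (y) (hy : y ∈ TT K col (n+1))
    (h0 : RE K L G (tt α e ^ m) y = 0) :
    ∃ z ∈ TT K col (n+1), y = RE K L G (tt α e ^ m') z := by
  set W := TT K (L := L) col (n+1) with hW
  set φ' : L → K := fun v => ω (col v) * ζ (φ v) with hφ'
  set t : Module.End K (ExteriorAlgebra K (L →₀ K)) := RE K L G (tt α e) with ht
  have htW : ∀ x ∈ W, t x ∈ W := fun x hx => RE_TT col hcol _ _ x hx
  have hDW : ∀ x ∈ W, der φ' x ∈ W := by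
    intro x hx
    induction hx using Submodule.span_induction with
    | mem x h =>
      obtain ⟨l, hl, hn, rfl⟩ := h
      rw [der_wedge]
      exact Submodule.smul_mem _ _ (Submodule.subset_span ⟨l, hl, hn, rfl⟩)
    | zero => simp
    | add x y _ _ hx hy => rw [map_add]; exact Submodule.add_mem _ hx hy
    | smul a x _ hx => rw [map_smul]; exact Submodule.smul_mem _ _ hx
  -- the commutator
  set Γ : Module.End K (ExteriorAlgebra K (L →₀ K)) := der φ' * t - t * der φ' with hΓ
  have hΓW : ∀ x ∈ W, Γ x ∈ W := by
    intro x hx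
    exact Submodule.sub_mem _ (hDW _ (htW _ hx)) (htW _ (hDW _ hx))
  have hΓw : ∀ l : List L, Γ (wedge K l) =
      RE K L G (gam α e (wt ζ ω col χ l)) (wedge K l) := by
    intro l
    have ht' : t (wedge K l) = ∑ i, α i • (wedge K (l.map (e i • ·)) - wedge K l) := by
      simp only [ht, tt, map_sum, map_smul, map_sub, map_one, RE_of, LinearMap.sum_apply,
        LinearMap.smul_apply, LinearMap.sub_apply, repE_wedge]
      rfl
    have hs : ∀ i, ((l.map (e i • ·)).map φ').sum = (l.map φ').sum + wt ζ ω col χ l i := by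
      intro i
      clear ht'
      induction l with
      | nil => simp [wt]
      | cons v l ih =>
        simp only [wt, hφ'] at ih
        simp only [List.map_cons, List.sum_cons, wt, hφ', hcol, hφ, map_add] at ih ⊢
        linear_combination ih
    simp only [hΓ, LinearMap.sub_apply, Module.End.mul_apply, der_wedge, map_smul, ht', map_sum,
      map_sub, hs, Finset.smul_sum, gam, RE_of, LinearMap.sum_apply, LinearMap.smul_apply, repE_wedge]
    rw [← Finset.sum_sub_distrib]
    refine Finset.sum_congr rfl fun i _ => ?_
    module
  have hΓR : ∀ (l : List L) (x : MonoidAlgebra K G), Γ (RE K L G x (wedge K l)) =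
      RE K L G (gam α e (wt ζ ω col χ l) * x) (wedge K l) := by
    intro l x
    induction x using RE_span with
    | h0 => simp
    | ha a b h1 h2 => rw [mul_add, map_add, map_add, LinearMap.add_apply, map_add, h1, h2]; rfl
    | hs c a h => rw [mul_smul_comm, map_smul, map_smul, LinearMap.smul_apply, map_smul, h]; rfl
    | ho g =>
      rw [RE_of, repE_wedge, hΓw, map_mul, Module.End.mul_apply, RE_of, repE_wedge]
      congr 3
      funext i
      simp [wt, Function.comp_def, hcol, hχ]
  have hΓpow : ∀ (l : List L) (j : ℕ), (Γ ^ j) (wedge K l) =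
      RE K L G (gam α e (wt ζ ω col χ l) ^ j) (wedge K l) := by
    intro l j
    induction j with
    | zero => simp
    | succ j ih => rw [pow_succ', Module.End.mul_apply, ih, hΓR, ← pow_succ']
  have hΓt : ∀ x ∈ W, Γ (t x) = t (Γ x) := by
    intro x hx
    induction hx using Submodule.span_induction with
    | mem x h =>
      obtain ⟨l, hl, hn, rfl⟩ := h
      rw [hΓw, ht, hΓR, mul_comm, map_mul, Module.End.mul_apply]
    | zero => simp
    | add x y _ _ hx hy => simp only [map_add, hx, hy]
    | smul a x _ hx => simp only [map_smul, hx]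
  set q := p * (Fintype.card K - 1) with hq
  have hq1 : 1 ≤ q := by
    have h1 : 1 < Fintype.card K := Fintype.one_lt_card
    have h2 : 0 < p := (Fact.out : p.Prime).pos
    exact Nat.mul_pos h2 (by omega)
  have hΓq : ∀ x ∈ W, (Γ ^ q) x = x := by
    intro x hx
    induction hx using Submodule.span_induction with
    | mem x h =>
      obtain ⟨l, hl, hn, rfl⟩ := h
      have hc := wt_ne ζ α ω col χ hne hind l (by rintro rfl; simp at hl) hn
      rw [hΓpow, hq, pow_mul, gam, sum_of_pow p hG, ← map_pow,
        FiniteField.pow_card_sub_one_eq_one _ (pow_ne_zero _ hc)]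
      rw [map_one, map_one]; rfl
    | zero => simp
    | add x y _ _ hx hy => simp only [map_add, hx, hy]
    | smul a x _ hx => simp only [map_smul, hx]
  -- restrict
  let tW : Module.End K W := t.restrict htW
  let DW : Module.End K W := (der φ').restrict hDW
  let ΓW : Module.End K W := Γ.restrict hΓW
  have hpow : ∀ j (x : W), (((ΓW ^ j) x : W) : ExteriorAlgebra K (L →₀ K)) = (Γ ^ j) x := by
    intro j x
    induction j with
    | zero => simp
    | succ j ih => rw [pow_succ', pow_succ', Module.End.mul_apply, Module.End.mul_apply, ← ih]; rfl
  have hpowt : ∀ j (x : W), (((tW ^ j) x : W) : ExteriorAlgebra K (L →₀ K)) = (t ^ j) x := by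
    intro j x
    induction j with
    | zero => simp
    | succ j ih => rw [pow_succ', pow_succ', Module.End.mul_apply, Module.End.mul_apply, ← ih]; rfl
  have hΓ1 : ΓW ^ q = 1 := by
    ext x
    rw [hpow, hΓq _ x.2]; rfl
  obtain ⟨z, hz⟩ := ker_le_im' p tW DW ΓW (ΓW ^ (q-1))
    (by ext x
        simp only [tW, DW, ΓW, hΓ, LinearMap.add_apply, Module.End.mul_apply, Submodule.coe_add,
          LinearMap.coe_restrict_apply, LinearMap.sub_apply]
        abel)
    (by ext x; exact hΓt _ x.2)
    (by rw [← pow_succ, Nat.sub_add_cancel hq1, hΓ1])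
    (by rw [← pow_succ', Nat.sub_add_cancel hq1, hΓ1])
    m ⟨y, hy⟩ (by ext; rw [hpowt, ht, ← map_pow]; simpa using h0) m' hm
  refine ⟨z, z.2, ?_⟩
  have := congrArg Subtype.val hz
  rw [hpowt, ht, ← map_pow] at this
  exact this

/-- exponents -/
def ex (p : ℕ) (i : ℕ) : ℕ := if i % 2 = 1 then 1 else p - 1

theorem ex_add (p : ℕ) (hp : 1 ≤ p) (i : ℕ) : ex p i + ex p (i+1) = p := by
  unfold ex
  rcases Nat.mod_two_eq_zero_or_one i with h | h
  · have : (i+1) % 2 = 1 := by omega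
    simp [h, this]; omega
  · have : (i+1) % 2 = 0 := by omega
    simp [h, this]; omega

theorem no_chain [Fintype K] [Fact p.Prime] [CharP K p] (hG : ∀ g : G, g ^ p = 1) [Fintype L]
    [Fintype κ] [DecidableEq κ] (ζ : ZMod p →+* K) (α : ι → K) (e : ι → G) (ω : κ → K) (col : L → κ)
    (hcol : ∀ (g : G) v, col (g • v) = col v) (χ : L → ι → ZMod p)
    (hχ : ∀ (g : G) v, χ (g • v) = χ v) (φ : L → ZMod p)
    (hφ : ∀ i v, φ (e i • v) = φ v + χ v i) (hne : ∀ v, χ v ≠ 0)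
    (hind : ∀ a : ι → κ → ZMod p, a ≠ 0 → ∑ i, ∑ c, ζ (a i c) * (α i * ω c) ≠ 0)
    (y : ℕ → ExteriorAlgebra K (L →₀ K)) (hy : ∀ i ≤ Fintype.card κ, y i ∈ TT K col (i+1))
    (h0 : bdE K L (y 0) = 1)
    (hb : ∀ i < Fintype.card κ, bdE K L (y (i+1)) = RE K L G (tt α e ^ ex p (i+1)) (y i)) :
    False := by
  have hp : p.Prime := Fact.out
  have hex := TT_exact (p := p) hG ζ α e ω col hcol χ hχ φ hφ hne hind
  have hbb : ∀ x, bdE K L (bdE K L x) = 0 := fun x => CliffordAlgebra.contractLeft_contractLeft _ _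
  -- descending claim
  have claim : ∀ j i, i + j = Fintype.card κ → ∃ z ∈ TT K col (i+1), ∃ z' ∈ TT K col (i+2),
      y i = bdE K L z' + RE K L G (tt α e ^ ex p i) z := by
    intro j
    induction j with
    | zero =>
      intro i hi
      have hz := hy i (by omega)
      rw [TT_zero col (i+1) (by omega)] at hz
      exact ⟨0, Submodule.zero_mem _, 0, Submodule.zero_mem _, by simpa using hz⟩
    | succ j ih =>
      intro i hi
      obtain ⟨z, hz, z', hz', hh⟩ := ih (i+1) (by omega)
      have h1 := hb i (by omega)
      rw [hh, map_add, hbb, zero_add, bdE_RE col _ _ _ hz] at h1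
      obtain ⟨w, hw, hw'⟩ := hex i (ex p (i+1)) (ex p i) (ex_add p hp.one_lt.le i).le
        (y i - bdE K L z) (Submodule.sub_mem _ (hy i (by omega)) (bdE_TT col _ _ hz))
        (by rw [map_sub, h1, sub_self])
      exact ⟨w, hw, z, hz, by rw [← hw']; abel⟩
  obtain ⟨z, hz, z', hz', hh⟩ := claim _ 0 (zero_add _)
  have h1 : bdE K L (y 0) = RE K L G (tt α e ^ ex p 0) (bdE K L z) := by
    rw [hh, map_add, hbb, zero_add, bdE_RE col _ _ _ hz]
  have h2 := bdE_TT col _ _ hz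
  have h3 : ∀ x ∈ TT K (L := L) col 0, RE K L G (tt α e) x = 0 := by
    intro x hx
    induction hx using Submodule.span_induction with
    | mem x h =>
      obtain ⟨l, hl, hn, rfl⟩ := h
      obtain rfl := List.length_eq_zero_iff.mp hl
      simp only [tt, map_sum, map_smul, map_sub, map_one, RE_of, LinearMap.sum_apply, LinearMap.smul_apply, LinearMap.sub_apply, wedge_nil, repE_one, Module.End.one_apply, sub_self, smul_zero, Finset.sum_const_zero]
    | zero => simp
    | add x y _ _ hx hy => simp only [map_add, hx, hy, add_zero]
    | smul a x _ hx => simp only [map_smul, hx, smul_zero]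
  have h4 : ex p 0 = (p - 2) + 1 := by have := hp.two_le; simp [ex]; omega
  rw [h0, h4, pow_succ, map_mul, Module.End.mul_apply, h3 _ h2, map_zero] at h1
  exact one_ne_zero h1

end Main
end TVB

namespace TVB
open scoped BigOperators

theorem field_data (p k : ℕ) [Fact p.Prime] (hk : 1 ≤ k) (κ : Type) [Fintype κ] [DecidableEq κ]
    [Nonempty κ] :
    ∃ (K : Type) (_ : Field K) (_ : Fintype K) (_ : CharP K p) (ζ : ZMod p →+* K) (α : Fin k → K)
      (ω : κ → K), ∀ a : Fin k → κ → ZMod p, a ≠ 0 → ∑ i, ∑ c, ζ (a i c) * (α i * ω c) ≠ 0 := by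
  classical
  set n := Fintype.card κ with hn
  have hn0 : 0 < n := Fintype.card_pos
  have hkn : k * n ≠ 0 := by positivity
  let pb := Field.powerBasisOfFiniteOfSeparable (ZMod p) (GaloisField p (k * n))
  have hdim : pb.dim = k * n := by
    rw [← pb.finrank, GaloisField.finrank p hkn]
  let eκ : κ ≃ Fin n := Fintype.equivFin κ
  refine ⟨GaloisField p (k*n), inferInstance, Fintype.ofFinite _, inferInstance,
    algebraMap _ _, fun i => pb.gen ^ (n * (i : ℕ)), fun c => pb.gen ^ (eκ c : ℕ), ?_⟩
  intro a ha h
  apply ha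
  have hli := pb.basis.linearIndependent
  rw [Fintype.linearIndependent_iff] at hli
  let E : Fin pb.dim ≃ Fin k × κ :=
    (finCongr hdim).trans (finProdFinEquiv.symm.trans (Equiv.prodCongr (Equiv.refl _) eκ.symm))
  have h1 := hli (fun j => a (E j).1 (E j).2) (by
    rw [← h, ← Fintype.sum_prod_type' (f := fun i c => (algebraMap (ZMod p) (GaloisField p (k*n))) (a i c) * (pb.gen ^ (n * (i : ℕ)) * pb.gen ^ (eκ c : ℕ))), ← E.sum_comp]
    refine Finset.sum_congr rfl fun j _ => ?_
    rw [Algebra.smul_def, pb.coe_basis, ← pow_add]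
    congr 1
    change pb.gen ^ (j : ℕ) = _
    congr 1
    have := congrArg Fin.val (finProdFinEquiv.apply_symm_apply (finCongr hdim j))
    rw [finProdFinEquiv_apply_val] at this
    change (j : ℕ) = n * ((finProdFinEquiv.symm (finCongr hdim j)).1 : ℕ) +
      (eκ (eκ.symm (finProdFinEquiv.symm (finCongr hdim j)).2) : ℕ)
    rw [Equiv.apply_symm_apply, add_comm, this]
    rfl)
  funext i c
  have := h1 (E.symm (i, c))
  simpa using this

end TVB

namespace TVB
open scoped BigOperators
section Chains
variable {K E F W : Type*} [Field K] [AddCommGroup W] [Module K W]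

theorem lc_mem {A : Type*} (g : A → W) (S : Set A) (U : Submodule K W) (hg : ∀ a ∈ S, g a ∈ U)
    (x : A →₀ K) (hx : x ∈ Finsupp.supported K K S) : Finsupp.linearCombination K g x ∈ U := by
  rw [Finsupp.linearCombination_apply, Finsupp.sum]
  refine Submodule.sum_mem _ fun a ha => Submodule.smul_mem _ _ (hg a ?_)
  exact (Finsupp.mem_supported K x).mp hx ha

theorem supp_induct {A : Type*} (S : Set A) (f g : (A →₀ K) →ₗ[K] W)
    (h : ∀ a ∈ S, f (Finsupp.single a 1) = g (Finsupp.single a 1)) (x : A →₀ K)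
    (hx : x ∈ Finsupp.supported K K S) : f x = g x := by
  rw [Finsupp.supported_eq_span_single] at hx
  induction hx using Submodule.span_induction with
  | mem x hx => obtain ⟨a, ha, rfl⟩ := hx; exact h a ha
  | zero => simp
  | add x y _ _ hx hy => simp [hx, hy]
  | smul c x _ hx => simp [hx]

/-- prepend a vertex -/
noncomputable def consL (K : Type*) [Field K] {E : Type*} (a : E) :
    (List E →₀ K) →ₗ[K] (List E →₀ K) := Finsupp.lmapDomain K K (List.cons a)

@[simp] theorem consL_single (a : E) (l : List E) (c : K) :
    consL K a (Finsupp.single l c) = Finsupp.single (a :: l) c := by simp [consL]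

/-- boundary of a list -/
noncomputable def bdl (K : Type*) [Field K] {E : Type*} : List E → (List E →₀ K)
  | [] => 0
  | a :: l => Finsupp.single l 1 - consL K a (bdl K l)

/-- boundary -/
noncomputable def bdL (K : Type*) [Field K] (E : Type*) : (List E →₀ K) →ₗ[K] (List E →₀ K) :=
  Finsupp.linearCombination K (bdl K)

@[simp] theorem bdL_single (l : List E) : bdL K E (Finsupp.single l 1) = bdl K l := by
  simp [bdL]

theorem bdL_consL (a : E) (x : List E →₀ K) :
    bdL K E (consL K a x) = x - consL K a (bdL K E x) := by
  have : (bdL K E ∘ₗ consL K a) = LinearMap.id - consL K a ∘ₗ bdL K E := by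
    ext l : 2
    simp [bdl]
  exact LinearMap.congr_fun this x

theorem bdL_bdl (l : List E) : bdL K E (bdl K l) = 0 := by
  induction l with
  | nil => simp [bdl]
  | cons a l ih => simp [bdl, bdL_consL, ih]

theorem bdL_bdL (x : List E →₀ K) : bdL K E (bdL K E x) = 0 := by
  have : (bdL K E ∘ₗ bdL K E) = 0 := by
    ext l : 2
    simp [bdL_bdl]
  exact LinearMap.congr_fun this x

theorem consL_supp (a : E) (S T : Set (List E)) (h : ∀ l ∈ S, a :: l ∈ T) (x : List E →₀ K)
    (hx : x ∈ Finsupp.supported K K S) : consL K a x ∈ Finsupp.supported K K T := by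
  have e : consL K a = Finsupp.linearCombination K (fun l => Finsupp.single (a :: l) (1:K)) := by
    ext l : 2; simp
  rw [e]
  exact lc_mem _ S _ (fun l hl => Finsupp.single_mem_supported K _ (h l hl)) x hx

theorem bdl_supp (l : List E) :
    bdl K l ∈ Finsupp.supported K K {l' | l'.Sublist l ∧ l'.length + 1 = l.length} := by
  induction l with
  | nil => simp [bdl]
  | cons a l ih =>
    rw [bdl]
    refine Submodule.sub_mem _ (Finsupp.single_mem_supported K _ ⟨List.sublist_cons_self a l, rfl⟩) ?_
    refine consL_supp a _ _ ?_ _ ih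
    rintro l' ⟨h1, h2⟩
    exact ⟨h1.cons_cons a, by simp [h2]⟩

/-- barycenter -/
noncomputable def bary [AddCommGroup E] [Module ℝ E] (l : List E) : E := (l.length : ℝ)⁻¹ • l.sum

variable [AddCommGroup E] [Module ℝ E]

/-- subdivision with fuel -/
noncomputable def sdl (K : Type*) [Field K] {E : Type*} [AddCommGroup E] [Module ℝ E] :
    ℕ → List E → (List E →₀ K)
  | 0, l => Finsupp.single l 1
  | n + 1, l => consL K (bary l) (Finsupp.linearCombination K (sdl K n) (bdl K l))

/-- subdivision -/
noncomputable def Sd (K : Type*) [Field K] (E : Type*) [AddCommGroup E] [Module ℝ E] :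
    (List E →₀ K) →ₗ[K] (List E →₀ K) :=
  Finsupp.linearCombination K (fun l => sdl K l.length l)

theorem Sd_nil : Sd K E (Finsupp.single [] 1) = Finsupp.single [] 1 := by
  simp [Sd, sdl]

theorem Sd_single (l : List E) (hl : l ≠ []) :
    Sd K E (Finsupp.single l 1) = consL K (bary l) (Sd K E (bdl K l)) := by
  obtain ⟨a, l', rfl⟩ := List.exists_cons_of_ne_nil hl
  have e : Sd K E (Finsupp.single (a :: l') 1) = sdl K (l'.length + 1) (a :: l') := by simp [Sd]
  rw [e, sdl]
  congr 1
  refine supp_induct _ _ _ ?_ _ (bdl_supp (a :: l'))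
  rintro m ⟨-, h2⟩
  simp only [List.length_cons, Nat.add_right_cancel_iff] at h2
  simp [Sd, h2]

theorem bdL_Sd (x : List E →₀ K) : bdL K E (Sd K E x) = Sd K E (bdL K E x) := by
  have key : ∀ n (l : List E), l.length = n → bdL K E (Sd K E (Finsupp.single l 1)) = Sd K E (bdl K l) := by
    intro n
    induction n with
    | zero =>
      intro l hl
      obtain rfl := List.length_eq_zero_iff.mp hl
      simp [Sd_nil, bdl]
    | succ n ih =>
      intro l hl
      rw [Sd_single l (by rintro rfl; simp at hl), bdL_consL]
      have : bdL K E (Sd K E (bdl K l)) = Sd K E (bdL K E (bdl K l)) := by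
        refine supp_induct _ (bdL K E ∘ₗ Sd K E) (Sd K E ∘ₗ bdL K E) ?_ _ (bdl_supp l)
        rintro m ⟨-, h2⟩
        simpa using ih m (by omega)
      rw [this, bdL_bdl, map_zero, map_zero, sub_zero]
  have : (bdL K E ∘ₗ Sd K E) = Sd K E ∘ₗ bdL K E := by
    ext l : 2
    simpa using key _ l rfl
  exact LinearMap.congr_fun this x

/-- functoriality -/
noncomputable def mapL (K : Type*) [Field K] {E : Type*} [AddCommGroup E] [Module ℝ E]
    (T : E →ₗ[ℝ] E) : (List E →₀ K) →ₗ[K] (List E →₀ K) :=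
  Finsupp.lmapDomain K K (List.map T)

@[simp] theorem mapL_single (T : E →ₗ[ℝ] E) (l : List E) (c : K) :
    mapL K T (Finsupp.single l c) = Finsupp.single (l.map T) c := by simp [mapL]

theorem mapL_consL (T : E →ₗ[ℝ] E) (a : E) (x : List E →₀ K) :
    mapL K T (consL K a x) = consL K (T a) (mapL K T x) := by
  have : (mapL K T ∘ₗ consL K a) = consL K (T a) ∘ₗ mapL K T := by
    ext l : 2
    simp
  exact LinearMap.congr_fun this x

theorem mapL_bdl (T : E →ₗ[ℝ] E) (l : List E) : mapL K T (bdl K l) = bdl K (l.map T) := by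
  induction l with
  | nil => simp [bdl]
  | cons a l ih => simp [bdl, mapL_consL, ih]

theorem mapL_bdL (T : E →ₗ[ℝ] E) (x : List E →₀ K) :
    mapL K T (bdL K E x) = bdL K E (mapL K T x) := by
  have : (mapL K T ∘ₗ bdL K E) = bdL K E ∘ₗ mapL K T := by
    ext l : 2
    simp [mapL_bdl]
  exact LinearMap.congr_fun this x

theorem bary_map (T : E →ₗ[ℝ] E) (l : List E) : bary (l.map T) = T (bary l) := by
  simp [bary, map_list_sum]

theorem mapL_Sd (T : E →ₗ[ℝ] E) (x : List E →₀ K) :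
    mapL K T (Sd K E x) = Sd K E (mapL K T x) := by
  have key : ∀ n (l : List E), l.length = n →
      mapL K T (Sd K E (Finsupp.single l 1)) = Sd K E (Finsupp.single (l.map T) 1) := by
    intro n
    induction n with
    | zero =>
      intro l hl
      obtain rfl := List.length_eq_zero_iff.mp hl
      simp [Sd_nil]
    | succ n ih =>
      intro l hl
      have hne : l ≠ [] := by rintro rfl; simp at hl
      rw [Sd_single l hne, Sd_single (l.map T) (by simpa using hne), mapL_consL, bary_map, ← mapL_bdl]
      congr 1
      refine supp_induct _ (mapL K T ∘ₗ Sd K E) (Sd K E ∘ₗ mapL K T) ?_ _ (bdl_supp l)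
      rintro m ⟨-, h2⟩
      simpa using ih m (by omega)
  have : (mapL K T ∘ₗ Sd K E) = Sd K E ∘ₗ mapL K T := by
    ext l : 2
    simpa using key _ l rfl
  exact LinearMap.congr_fun this x

end Chains

section Small
variable {K E : Type*} [Field K] [NormedAddCommGroup E] [NormedSpace ℝ E]

theorem bary_mem (l : List E) (hl : l ≠ []) (Q : Set E) (hQ : Convex ℝ Q) (h : ∀ a ∈ l, a ∈ Q) :
    bary l ∈ Q := by
  have hn : (0:ℝ) < l.length := by exact_mod_cast List.length_pos_iff.mpr hl
  have e : bary l = ∑ i : Fin l.length, ((l.length : ℝ)⁻¹) • l.get i := by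
    rw [bary, ← Finset.smul_sum]
    congr 1
    simp
  rw [e]
  refine hQ.sum_mem (fun _ _ => by positivity) ?_ (fun i _ => h _ (List.get_mem l i))
  simp
  field_simp

theorem dist_bary (N : ℕ) (l : List E) (hl : l.length ≤ N + 1) (D : ℝ)
    (h : ∀ a ∈ l, ∀ b ∈ l, dist a b ≤ D) (a : E) (ha : a ∈ l) :
    dist a (bary l) ≤ (N / (N + 1) : ℝ) * D := by
  have hpos : 0 < l.length := List.length_pos_of_mem ha
  have hn : (0:ℝ) < l.length := by exact_mod_cast hpos
  have hD : 0 ≤ D := dist_nonneg.trans (h a ha a ha)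
  have hle : ‖(l.map fun b => a - b).sum‖ ≤ (l.length - 1) * D := by
    obtain ⟨s, t, rfl⟩ := List.append_of_mem ha
    simp only [List.map_append, List.map_cons, sub_self, List.sum_append, List.sum_cons, zero_add]
    have aux : ∀ m : List E, (∀ b ∈ m, dist a b ≤ D) → ‖(m.map fun b => a - b).sum‖ ≤ m.length * D := by
      intro m
      induction m with
      | nil => simp
      | cons b m ih =>
        intro hm
        simp only [List.map_cons, List.sum_cons, List.length_cons]
        refine (norm_add_le _ _).trans ?_
        have h1 := ih fun b hb => hm b (List.mem_cons_of_mem _ hb)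
        have h2 := hm b List.mem_cons_self
        rw [dist_eq_norm] at h2
        push_cast
        linarith
    have h1 := aux s fun b hb => h a ha b (by simp [hb])
    have h2 := aux t fun b hb => h a ha b (by simp [hb])
    refine (norm_add_le _ _).trans ?_
    simp only [List.length_append, List.length_cons]
    push_cast
    linarith
  have e : a - bary l = (l.length : ℝ)⁻¹ • (l.map fun b => a - b).sum := by
    have : ∀ m : List E, (m.map fun b => a - b).sum = (m.length : ℝ) • a - m.sum := by
      intro m
      induction m with
      | nil => simp
      | cons b m ih => simp only [List.map_cons, List.sum_cons, ih, List.length_cons]; push_cast; module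
    rw [this, smul_sub, smul_smul, inv_mul_cancel₀ hn.ne', one_smul, bary]
  rw [dist_eq_norm, e, norm_smul, norm_inv, Real.norm_natCast]
  calc (l.length : ℝ)⁻¹ * ‖(l.map fun b => a - b).sum‖ ≤ (l.length : ℝ)⁻¹ * ((l.length - 1) * D) := by
        gcongr
    _ = ((l.length - 1) / l.length : ℝ) * D := by field_simp
    _ ≤ _ := by
        refine mul_le_mul_of_nonneg_right ?_ hD
        rw [div_le_div_iff₀ hn (by positivity)]
        have : (l.length : ℝ) ≤ N + 1 := by exact_mod_cast hl
        nlinarith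

theorem Sd_small (N : ℕ) (D : ℝ) (n : ℕ) : ∀ (l : List E) (_ : l.length = n) (_ : n ≤ N + 1)
    (Q : Set E) (_ : Convex ℝ Q) (_ : ∀ a ∈ l, a ∈ Q) (_ : ∀ a ∈ l, ∀ b ∈ l, dist a b ≤ D),
    Sd K E (Finsupp.single l 1) ∈ Finsupp.supported K K {l' : List E | l'.length = n ∧
      (∀ a ∈ l', a ∈ Q) ∧ ∀ a ∈ l', ∀ b ∈ l', dist a b ≤ (N / (N + 1) : ℝ) * D} := by
  induction n with
  | zero =>
    intro l hl _ Q _ _ _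
    obtain rfl := List.length_eq_zero_iff.mp hl
    rw [Sd_nil]
    exact Finsupp.single_mem_supported K _ (by simp)
  | succ n ih =>
    intro l hl hn Q hQ hlQ hlD
    have hne : l ≠ [] := by rintro rfl; simp at hl
    have hD : 0 ≤ D := by
      obtain ⟨a, ha⟩ := List.exists_mem_of_ne_nil l hne
      exact dist_nonneg.trans (hlD a ha a ha)
    rw [Sd_single l hne]
    set c := (N / (N + 1) : ℝ) * D with hc
    have hc0 : 0 ≤ c := by positivity
    refine consL_supp _ {l' : List E | l'.length = n ∧
      (∀ a ∈ l', a ∈ Q ∩ Metric.closedBall (bary l) c) ∧ ∀ a ∈ l', ∀ b ∈ l', dist a b ≤ c} _ ?_ _ ?_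
    · rintro l' ⟨h1, h2, h3⟩
      refine ⟨by simp [h1], ?_, ?_⟩
      · intro a ha
        rcases List.mem_cons.mp ha with rfl | ha
        · exact bary_mem l hne Q hQ hlQ
        · exact (h2 a ha).1
      · intro a ha b hb
        rcases List.mem_cons.mp ha with rfl | ha <;> rcases List.mem_cons.mp hb with rfl | hb
        · simpa using hc0
        · rw [dist_comm]; exact (h2 b hb).2
        · exact (h2 a ha).2
        · exact h3 a ha b hb
    · have hmem := bdl_supp (K := K) l
      have : Sd K E = Finsupp.linearCombination K (fun l => Sd K E (Finsupp.single l 1)) := by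
        ext l : 2; simp
      rw [this]
      refine lc_mem _ _ _ ?_ _ hmem
      rintro m ⟨h1, h2⟩
      refine ih m (by omega) (by omega) _ (hQ.inter (convex_closedBall _ _)) ?_ ?_
      · intro a ha
        exact ⟨hlQ a (h1.subset ha), dist_bary N l (by omega) D hlD a (h1.subset ha)⟩
      · intro a ha b hb
        exact hlD a (h1.subset ha) b (h1.subset hb)

theorem Sd_iter_small {H : Type*} (Q : H → Set E) (hQ : ∀ h, Convex ℝ (Q h)) (N : ℕ) (D : ℝ) (n : ℕ)
    (hn : n ≤ N + 1) (x : List E →₀ K)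
    (hx : x ∈ Finsupp.supported K K {l : List E | l.length = n ∧ (∃ h, ∀ a ∈ l, a ∈ Q h) ∧
      ∀ a ∈ l, ∀ b ∈ l, dist a b ≤ D}) (m : ℕ) :
    (Sd K E ^ m) x ∈ Finsupp.supported K K {l : List E | l.length = n ∧ (∃ h, ∀ a ∈ l, a ∈ Q h) ∧
      ∀ a ∈ l, ∀ b ∈ l, dist a b ≤ (N / (N + 1) : ℝ) ^ m * D} := by
  induction m with
  | zero => simpa using hx
  | succ m ih =>
    rw [pow_succ' (Sd K E), Module.End.mul_apply]
    have : Sd K E = Finsupp.linearCombination K (fun l => Sd K E (Finsupp.single l 1)) := by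
      ext l : 2; simp
    rw [this]
    refine lc_mem _ _ _ ?_ _ (by rw [← this]; exact ih)
    rintro l ⟨h1, ⟨h, h2⟩, h3⟩
    have := Sd_small (K := K) N _ n l h1 hn (Q h) (hQ h) h2 h3
    refine Finsupp.supported_mono ?_ this
    rintro l' ⟨h4, h5, h6⟩
    exact ⟨h4, ⟨h, h5⟩, fun a ha b hb => (h6 a ha b hb).trans (by rw [pow_succ']; linarith)⟩

end Small
end TVB

namespace TVB
open scoped BigOperators
section ActC
variable {K E G L κ ι : Type*} [Field K] [AddCommGroup E] [Module ℝ E] [CommGroup G] [MulAction G L]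
  [Fintype ι]

/-- action on chains -/
noncomputable def repC (K : Type*) [Field K] (ρ : G →* Module.End ℝ E) :
    G →* Module.End K (List E →₀ K) where
  toFun g := mapL K (ρ g)
  map_one' := by
    ext l : 2
    simp only [map_one, LinearMap.comp_apply, Finsupp.lsingle_apply, mapL_single, Module.End.one_apply]
    congr 1
    exact List.map_id l
  map_mul' g h := by ext l : 2; simp; rfl

/-- group ring action on chains -/
noncomputable def RC (K : Type*) [Field K] (ρ : G →* Module.End ℝ E) :
    MonoidAlgebra K G →ₐ[K] Module.End K (List E →₀ K) :=
  MonoidAlgebra.lift K _ G (repC K ρ)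

theorem RC_of (ρ : G →* Module.End ℝ E) (g : G) :
    RC K ρ (MonoidAlgebra.of K G g) = mapL K (ρ g) := by
  simp [RC, repC]

theorem RC_Sd (ρ : G →* Module.End ℝ E) (a : MonoidAlgebra K G) (x : List E →₀ K) :
    RC K ρ a (Sd K E x) = Sd K E (RC K ρ a x) := by
  induction a using RE_span with
  | h0 => simp
  | ha a b h1 h2 => simp [map_add, h1, h2]
  | hs c a h => simp [h]
  | ho g => rw [RC_of, mapL_Sd]

theorem RC_Sd_pow (ρ : G →* Module.End ℝ E) (a : MonoidAlgebra K G) (x : List E →₀ K) (m : ℕ) :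
    RC K ρ a ((Sd K E ^ m) x) = (Sd K E ^ m) (RC K ρ a x) := by
  induction m with
  | zero => simp
  | succ m ih => rw [pow_succ', Module.End.mul_apply, RC_Sd, ih, Module.End.mul_apply]

theorem bdL_Sd_pow (x : List E →₀ K) (m : ℕ) :
    bdL K E ((Sd K E ^ m) x) = (Sd K E ^ m) (bdL K E x) := by
  induction m with
  | zero => simp
  | succ m ih => rw [pow_succ', Module.End.mul_apply, bdL_Sd, ih, Module.End.mul_apply]

theorem RC_bdL (ρ : G →* Module.End ℝ E) (a : MonoidAlgebra K G) (x : List E →₀ K) :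
    RC K ρ a (bdL K E x) = bdL K E (RC K ρ a x) := by
  induction a using RE_span with
  | h0 => simp
  | ha a b h1 h2 => simp [map_add, h1, h2]
  | hs c a h => simp [h]
  | ho g => rw [RC_of, mapL_bdL]

theorem RC_supp (ρ : G →* Module.End ℝ E) (S : Set (List E))
    (hS : ∀ g, ∀ l ∈ S, l.map (ρ g) ∈ S) (a : MonoidAlgebra K G) (x : List E →₀ K)
    (hx : x ∈ Finsupp.supported K K S) : RC K ρ a x ∈ Finsupp.supported K K S := by
  induction a using RE_span with
  | h0 => simp
  | ha a b h1 h2 => rw [map_add]; exact Submodule.add_mem _ h1 h2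
  | hs c a h => rw [map_smul]; exact Submodule.smul_mem _ _ h
  | ho g =>
    rw [RC_of]
    have e : mapL K (ρ g) = Finsupp.linearCombination K (fun l => Finsupp.single (l.map (ρ g)) (1:K)) := by
      ext l : 2; simp
    rw [e]
    exact lc_mem _ S _ (fun l hl => Finsupp.single_mem_supported K _ (hS g l hl)) x hx

/-- from chains to the exterior algebra via labels -/
noncomputable def Th (K : Type*) [Field K] {E L : Type*} (lab : E → L) :
    (List E →₀ K) →ₗ[K] ExteriorAlgebra K (L →₀ K) :=
  Finsupp.linearCombination K (fun l => wedge K (l.map lab))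

@[simp] theorem Th_single {E : Type*} (lab : E → L) (l : List E) :
    Th K lab (Finsupp.single l 1) = wedge K (l.map lab) := by simp [Th]

theorem Th_consL {E : Type*} (lab : E → L) (a : E) (x : List E →₀ K) :
    Th K lab (consL K a x) = ExteriorAlgebra.ι K (Finsupp.single (lab a) (1:K)) * Th K lab x := by
  have : (Th K lab ∘ₗ consL K a) =
      LinearMap.mulLeft K (ExteriorAlgebra.ι K (Finsupp.single (lab a) (1:K))) ∘ₗ Th K lab := by
    ext l : 2
    simp
  exact LinearMap.congr_fun this x

theorem Th_bdl {E : Type*} (lab : E → L) (l : List E) :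
    Th K lab (bdl K l) = bdE K L (wedge K (l.map lab)) := by
  induction l with
  | nil => simp [bdl, bdE_one]
  | cons a l ih => rw [bdl, map_sub, Th_consL, Th_single, ih, List.map_cons, wedge_cons, bdE_cons]

theorem Th_bdL {E : Type*} (lab : E → L) (x : List E →₀ K) :
    Th K lab (bdL K E x) = bdE K L (Th K lab x) := by
  have : (Th K lab ∘ₗ bdL K E) = bdE K L ∘ₗ Th K lab := by
    ext l : 2
    simp [Th_bdl]
  exact LinearMap.congr_fun this x

theorem Th_RC (ρ : G →* Module.End ℝ E) (lab : E → L) (X : Set E)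
    (hX : ∀ g, ∀ a ∈ X, lab (ρ g a) = g • lab a) (a : MonoidAlgebra K G) (x : List E →₀ K)
    (hx : x ∈ Finsupp.supported K K {l | ∀ a ∈ l, a ∈ X}) :
    Th K lab (RC K ρ a x) = RE K L G a (Th K lab x) := by
  induction a using RE_span with
  | h0 => simp
  | ha a b h1 h2 => simp [map_add, h1, h2]
  | hs c a h => simp [h]
  | ho g =>
    rw [RC_of, RE_of]
    refine supp_induct _ (Th K lab ∘ₗ mapL K (ρ g)) (repE K L G g ∘ₗ Th K lab) ?_ _ hx
    intro l hl
    simp only [LinearMap.comp_apply, mapL_single, Th_single, repE_wedge, List.map_map]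
    congr 1
    refine List.map_congr_left fun a ha => ?_
    exact hX g a (hl a ha)

/-- the explicit chains -/
noncomputable def xc (p : ℕ) (ρ : G →* Module.End ℝ E) (v : ℕ → E) (t : MonoidAlgebra K G) :
    ℕ → (List E →₀ K)
  | 0 => Finsupp.single [v 0] 1
  | i + 1 => consL K (v (i+1)) (RC K ρ (t ^ ex p (i+1)) (xc p ρ v t i))

theorem bdL_xc_zero (p : ℕ) (ρ : G →* Module.End ℝ E) (v : ℕ → E) (t : MonoidAlgebra K G) :
    bdL K E (xc p ρ v t 0) = Finsupp.single [] 1 := by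
  simp [xc, bdl]

theorem bdL_xc (p : ℕ) [Fact p.Prime] [CharP K p] (hG : ∀ g : G, g ^ p = 1)
    (ρ : G →* Module.End ℝ E) (v : ℕ → E) (α : ι → K) (e : ι → G) (i : ℕ) :
    bdL K E (xc p ρ v (tt α e) (i+1)) = RC K ρ (tt α e ^ ex p (i+1)) (xc p ρ v (tt α e) i) := by
  have key : ∀ i, RC K ρ (tt α e ^ ex p (i+1)) (bdL K E (xc p ρ v (tt α e) i)) = 0 →
      bdL K E (xc p ρ v (tt α e) (i+1)) = RC K ρ (tt α e ^ ex p (i+1)) (xc p ρ v (tt α e) i) := by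
    intro i h
    rw [xc, bdL_consL, ← RC_bdL, h, map_zero, sub_zero]
  induction i with
  | zero =>
    apply key
    rw [bdL_xc_zero]
    have : ex p (0+1) = 1 := by simp [ex]
    rw [this, pow_one]
    simp only [tt, map_sum, map_smul, map_sub, map_one, RC_of, LinearMap.sum_apply,
      LinearMap.smul_apply, LinearMap.sub_apply, mapL_single, List.map_nil, Module.End.one_apply,
      sub_self, smul_zero, Finset.sum_const_zero]
  | succ i ih =>
    apply key
    rw [ih, ← Module.End.mul_apply, ← map_mul, ← pow_add, add_comm,
      ex_add p (Fact.out : p.Prime).one_lt.le, tt_pow p hG, map_zero, LinearMap.zero_apply]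

theorem xc_supp {H : Type*} (N : ℕ) (Q : ℕ → H → Set E) (p : ℕ) (ρ : G →* Module.End ℝ E) (v : ℕ → E)
    (t : MonoidAlgebra K G) (h0 : ∃ h, v 0 ∈ Q 0 h)
    (hg : ∀ i g h, ∃ h', ∀ a ∈ Q i h, ρ g a ∈ Q i h')
    (hs : ∀ i < N, ∀ h, ∃ h', Q i h ⊆ Q (i+1) h' ∧ v (i+1) ∈ Q (i+1) h') (i : ℕ) (hi : i ≤ N) :
    xc p ρ v t i ∈ Finsupp.supported K K {l : List E | l.length = i + 1 ∧ ∃ h, ∀ a ∈ l, a ∈ Q i h} := by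
  induction i with
  | zero =>
    obtain ⟨h, hh⟩ := h0
    exact Finsupp.single_mem_supported K _ ⟨rfl, h, by simpa using hh⟩
  | succ i ih =>
    rw [xc]
    refine consL_supp _ {l : List E | l.length = i + 1 ∧ ∃ h, ∀ a ∈ l, a ∈ Q i h} _ ?_ _ ?_
    · rintro l ⟨h1, h, h2⟩
      obtain ⟨h', h3, h4⟩ := hs i (by omega) h
      refine ⟨by simp [h1], h', ?_⟩
      intro a ha
      rcases List.mem_cons.mp ha with rfl | ha
      · exact h4
      · exact h3 (h2 a ha)
    · refine RC_supp ρ _ ?_ _ _ (ih (by omega))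
      rintro g l ⟨h1, h, h2⟩
      obtain ⟨h', h3⟩ := hg i g h
      refine ⟨by simpa using h1, h', ?_⟩
      intro a ha
      obtain ⟨b, hb, rfl⟩ := List.mem_map.mp ha
      exact h3 b (h2 b hb)
end ActC

section Final
variable {K E G L κ ι : Type*} [Field K] [NormedAddCommGroup E] [NormedSpace ℝ E] [CommGroup G]
  [MulAction G L] [Fintype ι] {p : ℕ}

theorem no_label [Fintype K] [Fact p.Prime] [CharP K p] (hG : ∀ g : G, g ^ p = 1) [Fintype L]
    [Fintype κ] [DecidableEq κ] (ζ : ZMod p →+* K) (α : ι → K) (e : ι → G) (ω : κ → K) (col : L → κ)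
    (hcol : ∀ (g : G) v, col (g • v) = col v) (χ : L → ι → ZMod p)
    (hχ : ∀ (g : G) v, χ (g • v) = χ v) (φ : L → ZMod p)
    (hφ : ∀ i v, φ (e i • v) = φ v + χ v i) (hne : ∀ v, χ v ≠ 0)
    (hind : ∀ a : ι → κ → ZMod p, a ≠ 0 → ∑ i, ∑ c, ζ (a i c) * (α i * ω c) ≠ 0)
    {H : Type*} (Q : ℕ → H → Set E) (ρ : G →* Module.End ℝ E) (v : ℕ → E)
    (hQ : ∀ i h, Convex ℝ (Q i h)) (h0 : ∃ h, v 0 ∈ Q 0 h)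
    (hg : ∀ i g h, ∃ h', ∀ a ∈ Q i h, ρ g a ∈ Q i h')
    (hs : ∀ i < Fintype.card κ, ∀ h, ∃ h', Q i h ⊆ Q (i+1) h' ∧ v (i+1) ∈ Q (i+1) h')
    (D : ℝ) (hD : ∀ i h, ∀ a ∈ Q i h, ∀ b ∈ Q i h, dist a b ≤ D)
    (X : Set E) (hQX : ∀ i h, Q i h ⊆ X) (lab : E → L)
    (hX : ∀ g, ∀ a ∈ X, lab (ρ g a) = g • lab a) (ε : ℝ) (hε : 0 < ε)
    (hlab : ∀ a ∈ X, ∀ b ∈ X, dist a b < ε → col (lab a) = col (lab b) → lab a = lab b) : False := by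
  set N := Fintype.card κ with hN
  obtain ⟨m, hm⟩ : ∃ m : ℕ, (N / (N + 1) : ℝ) ^ m * D < ε := by
    have h1 : Filter.Tendsto (fun m : ℕ => (N / (N + 1) : ℝ) ^ m * D) Filter.atTop (nhds (0 * D)) :=
      (tendsto_pow_atTop_nhds_zero_of_lt_one (by positivity)
        (by rw [div_lt_one (by positivity)]; linarith)).mul_const D
    rw [zero_mul] at h1
    exact (h1.eventually (gt_mem_nhds hε)).exists
  have hsm : ∀ i ≤ N, (Sd K E ^ m) (xc p ρ v (tt α e) i) ∈
      Finsupp.supported K K {l : List E | l.length = i + 1 ∧ (∃ h, ∀ a ∈ l, a ∈ Q i h) ∧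
      ∀ a ∈ l, ∀ b ∈ l, dist a b ≤ (N / (N + 1) : ℝ) ^ m * D} := by
    intro i hi
    refine Sd_iter_small (Q i) (hQ i) N D (i+1) (by omega) _ ?_ m
    refine Finsupp.supported_mono ?_ (xc_supp N Q p ρ v (tt α e) h0 hg hs i hi)
    rintro l ⟨h1, h, h2⟩
    exact ⟨h1, ⟨h, h2⟩, fun a ha b hb => hD i h a (h2 a ha) b (h2 b hb)⟩
  refine no_chain (p := p) hG ζ α e ω col hcol χ hχ φ hφ hne hind
    (fun i => Th K lab ((Sd K E ^ m) (xc p ρ v (tt α e) i))) ?_ ?_ ?_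
  · intro i hi
    refine lc_mem _ _ _ ?_ _ (hsm i hi)
    rintro l ⟨h1, ⟨h, h2⟩, h3⟩
    rw [← h1, ← List.length_map (f := lab)]
    apply wedge_mem_TT
    intro a ha b hb hab
    obtain ⟨a', ha', rfl⟩ := List.mem_map.mp ha
    obtain ⟨b', hb', rfl⟩ := List.mem_map.mp hb
    exact hlab _ (hQX i h (h2 _ ha')) _ (hQX i h (h2 _ hb')) ((h3 _ ha' _ hb').trans_lt hm) hab
  · rw [← Th_bdL, bdL_Sd_pow, bdL_xc_zero]
    have : (Sd K E ^ m) (Finsupp.single [] 1) = Finsupp.single [] 1 := by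
      clear hm hsm
      induction m with
      | zero => simp
      | succ m ih => rw [pow_succ', Module.End.mul_apply, ih, Sd_nil]
    rw [this, Th_single]
    simp
  · intro i hi
    rw [← Th_bdL, bdL_Sd_pow, bdL_xc p hG, ← RC_Sd_pow]
    refine Th_RC ρ lab X hX _ _ ?_
    refine Finsupp.supported_mono ?_ (hsm i (le_of_lt hi))
    rintro l ⟨h1, ⟨h, h2⟩, h3⟩ a ha
    exact hQX i h (h2 a ha)
end Final
end TVB

namespace TVB
open scoped BigOperators Pointwise

section Char
variable (p k : ℕ) [Fact p.Prime]

theorem charac (hk : 1 ≤ k) :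
    ∃ (χ : Finset (Fin k → ZMod p) → {f : Module.Dual (ZMod p) (Fin k → ZMod p) // f ≠ 0})
      (φ : Finset (Fin k → ZMod p) → ZMod p), ∀ T : Finset (Fin k → ZMod p), T.Nonempty → T ≠ Finset.univ →
      ∀ g, χ (g +ᵥ T) = χ T ∧ φ (g +ᵥ T) = φ T + (χ T).1 g := by
  classical
  set A := Fin k → ZMod p
  have hne : ∃ f : Module.Dual (ZMod p) A, f ≠ 0 := by
    refine ⟨LinearMap.proj ⟨0, hk⟩, fun h => ?_⟩
    have := LinearMap.congr_fun h (Pi.single (⟨0, hk⟩ : Fin k) 1)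
    simp at this
  have h1 : ∀ T : Finset A, ∃ f : {f : Module.Dual (ZMod p) A // f ≠ 0}, T.Nonempty → T ≠ Finset.univ →
      ∀ g : A, g +ᵥ T = T → f.1 g = 0 := by
    intro T
    by_cases hT : T.Nonempty ∧ T ≠ Finset.univ
    · set S := AddSubgroup.toZModSubmodule p (AddAction.stabilizer A T) with hS
      have hlt : S < ⊤ := by
        rw [lt_top_iff_ne_top]
        intro h
        apply hT.2
        obtain ⟨t, ht⟩ := hT.1
        ext x
        simp only [Finset.mem_univ, iff_true]
        have : x - t ∈ S := by rw [h]; trivial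
        rw [hS, AddSubgroup.mem_toZModSubmodule, AddAction.mem_stabilizer_iff] at this
        rw [← this]
        have h2 := Finset.vadd_mem_vadd_finset (a := x - t) ht
        simpa using h2
      obtain ⟨f, hf, hle⟩ := Submodule.exists_le_ker_of_lt_top S hlt
      refine ⟨⟨f, hf⟩, fun _ _ g hg => ?_⟩
      have : g ∈ S := by
        rw [hS, AddSubgroup.mem_toZModSubmodule, AddAction.mem_stabilizer_iff]; exact hg
      exact hle this
    · obtain ⟨f, hf⟩ := hne
      exact ⟨⟨f, hf⟩, fun h1 h2 => (hT ⟨h1, h2⟩).elim⟩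
  choose χ0 hχ0 using h1
  let rep : Finset A → Finset A := fun T =>
    (Quotient.out (Quotient.mk (AddAction.orbitRel A (Finset A)) T) : Finset A)
  have hrep : ∀ T, ∃ g : A, g +ᵥ rep T = T := by
    intro T
    have : (AddAction.orbitRel A (Finset A)).r (rep T) T := Quotient.mk_out T
    have h2 : rep T ∈ AddAction.orbit A T := this
    obtain ⟨g, hg⟩ := h2
    exact ⟨-g, by rw [← hg]; exact neg_vadd_vadd g T⟩
  have hrep2 : ∀ T (g : A), rep (g +ᵥ T) = rep T := by
    intro T g
    simp only [rep]
    congr 1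
    exact Quotient.sound ⟨g, rfl⟩
  choose gT hgT using hrep
  refine ⟨fun T => χ0 (rep T), fun T => (χ0 (rep T)).1 (gT T), ?_⟩
  intro T hT1 hT2 g
  refine ⟨congrArg χ0 (hrep2 T g), ?_⟩
  simp only [hrep2]
  have hs : (g + gT T - gT (g +ᵥ T)) +ᵥ rep T = rep T := by
    have e1 : gT (g +ᵥ T) +ᵥ rep T = g +ᵥ (gT T +ᵥ rep T) := by
      rw [hgT T, ← hrep2 T g, hgT]
    rw [sub_eq_neg_add, add_vadd, add_vadd, ← e1, neg_vadd_vadd]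
  have hr1 : (rep T).Nonempty := by
    rw [← hgT T] at hT1
    simpa using hT1
  have hr2 : rep T ≠ Finset.univ := by
    intro h
    apply hT2
    rw [← hgT T, h]
    simp
  have := hχ0 (rep T) hr1 hr2 _ hs
  rw [map_sub, map_add, sub_eq_zero] at this
  rw [← this, add_comm]

/-- labels -/
def LL (κ : Type) : Type :=
  κ × {f : Module.Dual (ZMod p) (Fin k → ZMod p) // f ≠ 0} × ZMod p

instance LLact (κ : Type) : MulAction (Multiplicative (Fin k → ZMod p)) (LL p k κ) where
  smul g v := (v.1, v.2.1, v.2.2 + v.2.1.1 (Multiplicative.toAdd g))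
  one_smul v := by
    change (v.1, v.2.1, v.2.2 + v.2.1.1 0) = v
    rw [map_zero, add_zero]
    rfl
  mul_smul g h v := by
    change (v.1, v.2.1, v.2.2 + v.2.1.1 (Multiplicative.toAdd g + Multiplicative.toAdd h)) =
      (v.1, v.2.1, (v.2.2 + v.2.1.1 (Multiplicative.toAdd h)) + v.2.1.1 (Multiplicative.toAdd g))
    rw [map_add]
    congr 2
    ring

theorem LL_smul (κ : Type) (g : Multiplicative (Fin k → ZMod p)) (v : LL p k κ) :
    g • v = (v.1, v.2.1, v.2.2 + v.2.1.1 (Multiplicative.toAdd g)) := rfl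

theorem LL_fin (κ : Type) [Fintype κ] : Nonempty (Fintype (LL p k κ)) := by
  have : Finite (Module.Dual (ZMod p) (Fin k → ZMod p)) :=
    Finite.of_injective (fun f => (f : (Fin k → ZMod p) → ZMod p)) DFunLike.coe_injective
  have : Finite (LL p k κ) :=
    inferInstanceAs (Finite (κ × {f : Module.Dual (ZMod p) (Fin k → ZMod p) // f ≠ 0} × ZMod p))
  exact ⟨Fintype.ofFinite _⟩

end Char

set_option linter.unusedSectionVars false
section Cfg
variable (N : ℕ) (A : Type) [AddCommGroup A] [Fintype A]

/-- pieces of the configuration complex -/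
def QQ (i : ℕ) (h : Fin (N+1) → A) : Set (Fin (N+1) → A → ℝ) :=
  {z | (∀ k a, 0 ≤ z k a) ∧ (∑ k, ∑ a, z k a) = 1 ∧ ∀ k a, ¬ (a = h k ∧ (k : ℕ) ≤ i) → z k a = 0}

/-- translation -/
def rhoT : Multiplicative A →* Module.End ℝ (Fin (N+1) → A → ℝ) where
  toFun g := { toFun := fun z k a => z k (a - Multiplicative.toAdd g)
               map_add' := fun _ _ => rfl
               map_smul' := fun _ _ => rfl }
  map_one' := by
    ext z k a
    simp
  map_mul' g h := by
    refine LinearMap.ext fun z => ?_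
    funext k a
    change z k _ = z k _
    congr 1
    change a - (Multiplicative.toAdd g + Multiplicative.toAdd h) = _
    abel

variable {N A}

theorem rhoT_apply (g : Multiplicative A) (z : Fin (N+1) → A → ℝ) (k a) :
    rhoT N A g z k a = z k (a - Multiplicative.toAdd g) := rfl

theorem QQ_convex (i : ℕ) (h : Fin (N+1) → A) : Convex ℝ (QQ N A i h) := by
  rintro x ⟨h1, h2, h3⟩ y ⟨h4, h5, h6⟩ a b ha hb hab
  refine ⟨fun k c => ?_, ?_, fun k c hc => ?_⟩
  · have := h1 k c; have := h4 k c
    simp only [Pi.add_apply, Pi.smul_apply, smul_eq_mul]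
    positivity
  · simp only [Pi.add_apply, Pi.smul_apply, smul_eq_mul, Finset.sum_add_distrib, ← Finset.mul_sum, h2, h5]
    linarith
  · simp [h3 k c hc, h6 k c hc]

theorem QQ_le_one (i : ℕ) (h : Fin (N+1) → A) (z) (hz : z ∈ QQ N A i h) (k a) : z k a ≤ 1 := by
  rw [← hz.2.1]
  calc z k a ≤ ∑ a, z k a := Finset.single_le_sum (f := fun a => z k a) (fun a _ => hz.1 k a) (Finset.mem_univ a)
    _ ≤ _ := Finset.single_le_sum (f := fun k => ∑ a, z k a) (fun k _ => Finset.sum_nonneg fun a _ => hz.1 k a) (Finset.mem_univ k)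

theorem QQ_dist (i : ℕ) (h : Fin (N+1) → A) (z) (hz : z ∈ QQ N A i h) (w) (hw : w ∈ QQ N A i h) :
    dist z w ≤ 1 := by
  rw [dist_pi_le_iff zero_le_one]
  intro k
  rw [dist_pi_le_iff zero_le_one]
  intro a
  rw [Real.dist_eq, abs_le]
  have := hz.1 k a
  have := hw.1 k a
  have := QQ_le_one i h z hz k a
  have := QQ_le_one i h w hw k a
  constructor <;> linarith

theorem QQ_compact (i : ℕ) (h : Fin (N+1) → A) : IsCompact (QQ N A i h) := by
  refine Metric.isCompact_of_isClosed_isBounded ?_ ?_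
  · have e : QQ N A i h = (⋂ k, ⋂ a, {z | 0 ≤ z k a}) ∩ ({z | (∑ k, ∑ a, z k a) = 1} ∩
        ⋂ k, ⋂ a, ⋂ (_ : ¬ (a = h k ∧ (k : ℕ) ≤ i)), {z | z k a = 0}) := by
      ext z; simp [QQ]
    rw [e]
    refine IsClosed.inter ?_ (IsClosed.inter ?_ ?_)
    · refine isClosed_iInter fun k => isClosed_iInter fun a => ?_
      exact isClosed_le continuous_const (by fun_prop)
    · exact isClosed_eq (by fun_prop) continuous_const
    · refine isClosed_iInter fun k => isClosed_iInter fun a => isClosed_iInter fun _ => ?_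
      exact isClosed_eq (by fun_prop) continuous_const
  · rw [Metric.isBounded_iff]
    exact ⟨1, fun x hx y hy => QQ_dist i h x hx y hy⟩

theorem QQ_mono (i : ℕ) (h : Fin (N+1) → A) : QQ N A i h ⊆ QQ N A N h := by
  rintro z ⟨h1, h2, h3⟩
  refine ⟨h1, h2, fun k a hka => h3 k a fun hh => hka ⟨hh.1, by omega⟩⟩

theorem QQ_act (i : ℕ) (g : Multiplicative A) (h : Fin (N+1) → A) :
    ∃ h', ∀ z ∈ QQ N A i h, rhoT N A g z ∈ QQ N A i h' := by
  refine ⟨fun k => h k + Multiplicative.toAdd g, ?_⟩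
  rintro z ⟨h1, h2, h3⟩
  refine ⟨fun k a => h1 _ _, ?_, fun k a hka => h3 _ _ fun hh => hka ⟨?_, hh.2⟩⟩
  · rw [← h2]
    refine Finset.sum_congr rfl fun k _ => ?_
    exact (Equiv.subRight (Multiplicative.toAdd g)).sum_comp (fun a => z k a)
  · change a = h k + _
    rw [← hh.1]; abel

open Classical in
/-- base vertices -/
noncomputable def vv (N : ℕ) (A : Type) [AddCommGroup A] (i : ℕ) : Fin (N+1) → A → ℝ :=
  fun k a => if (k : ℕ) = i ∧ a = 0 then 1 else 0

theorem vv_mem (i : ℕ) (hi : i ≤ N) (h : Fin (N+1) → A) (hh : h ⟨i, by omega⟩ = 0) :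
    vv N A i ∈ QQ N A i h := by
  classical
  refine ⟨fun k a => by unfold vv; split_ifs <;> norm_num, ?_, fun k a hka => ?_⟩
  · rw [Finset.sum_eq_single (⟨i, by omega⟩ : Fin (N+1))]
    · simp [vv]
    · intro k _ hk
      have : (k : ℕ) ≠ i := fun h => hk (Fin.ext h)
      simp [vv, this]
    · simp
  · unfold vv
    rw [if_neg]
    rintro ⟨h1, rfl⟩
    apply hka
    have : k = ⟨i, by omega⟩ := Fin.ext h1
    exact ⟨by rw [this, hh], h1.le⟩

theorem QQ_succ (i : ℕ) (hi : i < N) (h : Fin (N+1) → A) :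
    ∃ h', QQ N A i h ⊆ QQ N A (i+1) h' ∧ vv N A (i+1) ∈ QQ N A (i+1) h' := by
  refine ⟨fun k => if (k : ℕ) ≤ i then h k else 0, ?_, ?_⟩
  · rintro z ⟨h1, h2, h3⟩
    refine ⟨h1, h2, fun k a hka => h3 k a fun hh => hka ⟨?_, by omega⟩⟩
    change a = if (k : ℕ) ≤ i then h k else 0
    rw [if_pos hh.2]; exact hh.1
  · apply vv_mem _ (by omega)
    simp

end Cfg
end TVB

namespace TVB
open scoped BigOperators Pointwise

set_option linter.unusedSectionVars false
section Lab
variable {A : Type} [AddCommGroup A] [Fintype A] [DecidableEq A] {D : ℕ}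

/-- a gap -/
def Gap (F : A → Fin D → ℝ) (δ : ℝ) (i : Fin D) (T : Finset A) : Prop :=
  T.Nonempty ∧ T ≠ Finset.univ ∧ ∀ a ∈ T, ∀ b ∉ T, F b i + δ ≤ F a i

theorem Gap_unique (F F' : A → Fin D → ℝ) (δ : ℝ) (i : Fin D) (T T' : Finset A) (h : Gap F δ i T)
    (h' : Gap F' δ i T') (hc : T.card = T'.card) (hF : ∀ a, |F a i - F' a i| < δ) : T = T' := by
  by_contra hne
  have h1 : ¬ T ⊆ T' := fun hh => hne (Finset.eq_of_subset_of_card_le hh hc.ge)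
  have h2 : ¬ T' ⊆ T := fun hh => hne (Finset.eq_of_subset_of_card_le hh hc.le).symm
  obtain ⟨a, ha, ha'⟩ := Finset.not_subset.mp h1
  obtain ⟨b, hb, hb'⟩ := Finset.not_subset.mp h2
  have e1 := h.2.2 a ha b hb'
  have e2 := h'.2.2 b hb a ha'
  have e3 := abs_lt.mp (hF a)
  have e4 := abs_lt.mp (hF b)
  linarith [e3.1, e3.2, e4.1, e4.2]

theorem Gap_trans (F : A → Fin D → ℝ) (δ : ℝ) (i : Fin D) (T : Finset A) (g : A) (h : Gap F δ i T) :
    Gap (fun a => F (a - g)) δ i (g +ᵥ T) := by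
  refine ⟨by simpa using h.1, ?_, ?_⟩
  · intro hh
    apply h.2.1
    have : -g +ᵥ (g +ᵥ T) = -g +ᵥ (Finset.univ : Finset A) := by rw [hh]
    simpa using this
  · intro a ha b hb
    have key : ∀ x, x ∈ g +ᵥ T ↔ x - g ∈ T := by
      intro x
      rw [Finset.mem_vadd_finset]
      constructor
      · rintro ⟨y, hy, rfl⟩
        simpa using hy
      · intro hx
        exact ⟨_, hx, by simp⟩
    exact h.2.2 _ ((key a).mp ha) _ (fun hh => hb ((key b).mpr hh))

theorem Gap_exists (F : A → Fin D → ℝ) (hF : ∃ a b, F a ≠ F b) : ∃ (n : ℕ) (i : Fin D) (T : Finset A),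
    T.Nonempty ∧ T ≠ Finset.univ ∧ ∀ a ∈ T, ∀ b ∉ T, F b i + 1 / ((n:ℝ) + 1) < F a i := by
  obtain ⟨a, b, hab⟩ := hF
  obtain ⟨i, hi⟩ := Function.ne_iff.mp hab
  obtain ⟨m, hm⟩ := Finite.exists_max (fun a => F a i)
  set T := Finset.univ.filter (fun a => F a i = F m i) with hT
  have hlt : ∀ a ∈ T, ∀ b ∉ T, F b i < F a i := by
    intro a ha b hb
    simp only [hT, Finset.mem_filter, Finset.mem_univ, true_and] at ha hb
    rw [ha]
    exact lt_of_le_of_ne (hm b) hb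
  have hev : ∀ᶠ n : ℕ in Filter.atTop, ∀ a b, a ∈ T → b ∉ T → F b i + 1 / ((n:ℝ) + 1) < F a i := by
    rw [Filter.eventually_all]
    intro a
    rw [Filter.eventually_all]
    intro b
    by_cases ha : a ∈ T
    · by_cases hb : b ∈ T
      · simp [hb]
      · have h1 : Filter.Tendsto (fun n : ℕ => F b i + 1 / ((n:ℝ) + 1)) Filter.atTop (nhds (F b i + 0)) :=
          tendsto_const_nhds.add tendsto_one_div_add_atTop_nhds_zero_nat
        rw [add_zero] at h1
        filter_upwards [h1.eventually (gt_mem_nhds (hlt a ha b hb))] with n hn _ _ using hn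
    · simp [ha]
  obtain ⟨n, hn⟩ := hev.exists
  refine ⟨n, i, T, ⟨m, by simp [hT]⟩, ?_, fun a ha b hb => hn a b ha hb⟩
  intro hh
  have h1 : a ∈ T := by rw [hh]; simp
  have h2 : b ∈ T := by rw [hh]; simp
  simp only [hT, Finset.mem_filter, Finset.mem_univ, true_and] at h1 h2
  exact hi (h1.trans h2.symm)

theorem Gap_uniform {Y : Type*} [TopologicalSpace Y] (X : Set Y) (hX : IsCompact X)
    (F : Y → A → Fin D → ℝ) (hFc : Continuous F) (hF : ∀ z ∈ X, ∃ a b, F z a ≠ F z b) :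
    ∃ δ > 0, ∀ z ∈ X, ∃ i T, Gap (F z) δ i T := by
  let U : ℕ → Set Y := fun n => ⋃ (i : Fin D) (T : Finset A) (_ : T.Nonempty ∧ T ≠ Finset.univ),
    ⋂ a : T, ⋂ b : {b // b ∉ T}, {z | F z b i + 1 / ((n:ℝ) + 1) < F z a i}
  have hU : ∀ n, IsOpen (U n) := by
    intro n
    refine isOpen_iUnion fun i => isOpen_iUnion fun T => isOpen_iUnion fun _ =>
      isOpen_iInter_of_finite fun a => isOpen_iInter_of_finite fun b => ?_
    exact isOpen_lt (by fun_prop) (by fun_prop)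
  have hmem : ∀ n z, z ∈ U n ↔ ∃ (i : Fin D) (T : Finset A),
    (T.Nonempty ∧ T ≠ Finset.univ) ∧ ∀ a ∈ T, ∀ b ∉ T, F z b i + 1 / ((n:ℝ) + 1) < F z a i := by
    intro n z
    simp only [U, Set.mem_iUnion, Set.mem_iInter, Set.mem_ofPred_eq, Subtype.forall, exists_prop]
  have hdir : Directed (· ⊆ ·) U := by
    refine Monotone.directed_le ?_
    intro m n hmn z hz
    rw [hmem] at hz ⊢
    obtain ⟨i, T, hT, h⟩ := hz
    refine ⟨i, T, hT, fun a ha b hb => lt_of_le_of_lt ?_ (h a ha b hb)⟩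
    have : (1 : ℝ) / ((n:ℝ) + 1) ≤ 1 / ((m:ℝ) + 1) := Nat.one_div_le_one_div hmn
    linarith
  obtain ⟨n, hn⟩ := hX.elim_directed_cover U hU (by
    intro z hz
    obtain ⟨n, i, T, h1, h2, h3⟩ := Gap_exists (F z) (hF z hz)
    exact Set.mem_iUnion.mpr ⟨n, (hmem n z).mpr ⟨i, T, ⟨h1, h2⟩, h3⟩⟩) hdir
  refine ⟨1 / ((n:ℝ) + 1), by positivity, fun z hz => ?_⟩
  obtain ⟨i, T, ⟨h1, h2⟩, h3⟩ := (hmem n z).mp (hn hz)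
  exact ⟨i, T, h1, h2, fun a ha b hb => (h3 a ha b hb).le⟩

end Lab

theorem topTv (p k D : ℕ) [Fact p.Prime] (hk : 1 ≤ k) (hD : 1 ≤ D) (N : ℕ) (hN : N = D * (p ^ k - 1))
    (Φ : (Fin (N+1) → ℝ) → Fin D → ℝ) (hΦ : Continuous Φ) :
    ∃ h, ∃ z ∈ QQ N (Fin k → ZMod p) N h, ∀ a b, Φ (fun j => z j a) = Φ (fun j => z j b) := by
  classical
  by_contra hcon
  push Not at hcon
  have hp : p.Prime := Fact.out
  have hr : 1 < p ^ k := Nat.one_lt_pow (by omega) hp.one_lt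
  set A := Fin k → ZMod p with hA
  have hcardA : Fintype.card A = p ^ k := by simp [hA, ZMod.card]
  let κ := Fin D × Fin (p ^ k - 1)
  have hκ : Fintype.card κ = N := by simp [κ, hN]
  have : Nonempty κ := ⟨(⟨0, hD⟩, ⟨0, by omega⟩)⟩
  let X : Set (Fin (N+1) → A → ℝ) := ⋃ h, QQ N A N h
  have hXc : IsCompact X := isCompact_iUnion fun h => QQ_compact N h
  let F : (Fin (N+1) → A → ℝ) → A → Fin D → ℝ := fun z a => Φ (fun j => z j a)
  have hFc : Continuous F := by
    refine continuous_pi fun a => hΦ.comp ?_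
    fun_prop
  have hFρ : ∀ g z, F (rhoT N A g z) = fun a => F z (a - Multiplicative.toAdd g) := fun g z => rfl
  obtain ⟨δ, hδ, hgap⟩ := Gap_uniform X hXc F hFc (by
    intro z hz
    obtain ⟨h, hz⟩ := Set.mem_iUnion.mp hz
    obtain ⟨a, b, hab⟩ := hcon h z hz
    exact ⟨a, b, hab⟩)
  -- available colours
  let av : (Fin (N+1) → A → ℝ) → κ → Finset A → Prop := fun z c T =>
    Gap (F z) δ c.1 T ∧ T.card = c.2 + 1
  let S : (Fin (N+1) → A → ℝ) → Set κ := fun z => {c | ∃ T, av z c T}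
  have hSne : ∀ z ∈ X, (S z).Nonempty := by
    intro z hz
    obtain ⟨i, T, hT⟩ := hgap z hz
    have h1 : 1 ≤ T.card := hT.1.card_pos
    have h2 : T.card < p ^ k := by
      rw [← hcardA]; exact Finset.card_lt_univ_of_notMem (Finset.exists_of_ssubset
        (Finset.ssubset_univ_iff.mpr hT.2.1)).choose_spec.2
    exact ⟨(i, ⟨T.card - 1, by omega⟩), T, hT, by simp; omega⟩
  have hav : ∀ g z c T, av z c T → av (rhoT N A g z) c (Multiplicative.toAdd g +ᵥ T) := by
    intro g z c T h
    refine ⟨?_, by simpa using h.2⟩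
    rw [hFρ]
    exact Gap_trans _ _ _ _ _ h.1
  have hSρ : ∀ g z, S (rhoT N A g z) = S z := by
    intro g z
    apply Set.Subset.antisymm
    · rintro c ⟨T, hT⟩
      have := hav g⁻¹ _ _ _ hT
      have e : rhoT N A g⁻¹ (rhoT N A g z) = z := by
        rw [← Module.End.mul_apply, ← map_mul, inv_mul_cancel, map_one]; rfl
      rw [e] at this
      exact ⟨_, this⟩
    · rintro c ⟨T, hT⟩
      exact ⟨_, hav g z c T hT⟩
  have hXρ : ∀ g, ∀ z ∈ X, rhoT N A g z ∈ X := by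
    intro g z hz
    obtain ⟨h, hz⟩ := Set.mem_iUnion.mp hz
    obtain ⟨h', hh⟩ := QQ_act N g h
    exact Set.mem_iUnion.mpr ⟨h', hh z hz⟩
  let cz : (Fin (N+1) → A → ℝ) → κ := fun z => Classical.epsilon (fun c => c ∈ S z)
  let Tz : (Fin (N+1) → A → ℝ) → Finset A := fun z => Classical.epsilon (fun T => av z (cz z) T)
  have hcz : ∀ z ∈ X, cz z ∈ S z := fun z hz => Classical.epsilon_spec (hSne z hz)
  have hTz : ∀ z ∈ X, av z (cz z) (Tz z) := fun z hz => Classical.epsilon_spec (hcz z hz)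
  have hczρ : ∀ g z, cz (rhoT N A g z) = cz z := by
    intro g z
    simp only [cz, hSρ]
  have huniq : ∀ z ∈ X, ∀ w ∈ X, cz z = cz w → (∀ a i, |F z a i - F w a i| < δ) → ∀ T T',
      av z (cz z) T → av w (cz w) T' → T = T' := by
    intro z hz w hw hc hF T T' h1 h2
    rw [← hc] at h2
    exact Gap_unique _ _ δ _ T T' h1.1 h2.1 (h1.2.trans h2.2.symm) (fun a => hF a _)
  have hTρ : ∀ g, ∀ z ∈ X, Tz (rhoT N A g z) = Multiplicative.toAdd g +ᵥ Tz z := by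
    intro g z hz
    refine huniq _ (hXρ g z hz) _ (hXρ g z hz) rfl (fun a i => by simpa using hδ) _ _
      (hTz _ (hXρ g z hz)) ?_
    rw [hczρ]
    exact hav g z _ _ (hTz z hz)
  obtain ⟨ε, hε, hunif⟩ : ∃ ε > 0, ∀ z ∈ X, ∀ w ∈ X, dist z w < ε → dist (F z) (F w) < δ := by
    have := hXc.uniformContinuousOn_of_continuous hFc.continuousOn
    rw [Metric.uniformContinuousOn_iff] at this
    obtain ⟨ε, h1, h2⟩ := this δ hδ
    exact ⟨ε, h1, h2⟩
  obtain ⟨χ, φ, hχφ⟩ := charac p k hk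
  obtain ⟨K, iF, iFin, iC, ζ, α, ω, hind⟩ := field_data p k hk κ
  obtain ⟨iL⟩ := LL_fin p k κ
  let lab : (Fin (N+1) → A → ℝ) → LL p k κ := fun z => (cz z, χ (Tz z), φ (Tz z))
  refine no_label (p := p) (G := Multiplicative A) (L := LL p k κ) (K := K) (E := Fin (N+1) → A → ℝ)
    ?_ ζ α (fun i => Multiplicative.ofAdd (Pi.single i 1)) ω
    (fun v => v.1) ?_ (fun v i => v.2.1.1 (Pi.single i 1)) ?_ (fun v => v.2.2) ?_ ?_ hind
    (QQ N A) (rhoT N A) (vv N A) QQ_convex ?_ QQ_act ?_ 1 QQ_dist X ?_ lab ?_ ε hε ?_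
  · intro g
    change Multiplicative.ofAdd (p • Multiplicative.toAdd g) = 1
    have : p • Multiplicative.toAdd g = 0 := by
      funext i
      change p • (Multiplicative.toAdd g : Fin k → ZMod p) i = 0
      simp
    rw [this]; rfl
  · intro g v; rfl
  · intro g v; rfl
  · intro i v; rfl
  · intro v h
    apply v.2.1.2
    refine LinearMap.pi_ext' fun i => ?_
    ext
    exact congrFun h i
  · exact ⟨fun _ => 0, vv_mem 0 (Nat.zero_le _) _ rfl⟩
  · intro i hi h
    exact QQ_succ i (by rw [hκ] at hi; exact hi) h
  · intro i h
    exact (QQ_mono i h).trans (Set.subset_iUnion (fun h => QQ N A N h) h)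
  · intro g z hz
    have hg := hχφ (Tz z) (hTz z hz).1.1 (hTz z hz).1.2.1 (Multiplicative.toAdd g)
    rw [LL_smul]
    simp only [lab, hczρ]
    rw [hTρ g z hz, hg.1, hg.2]
  · intro z hz w hw hd hc
    have hc' : cz z = cz w := hc
    have hT : Tz z = Tz w := by
      refine huniq z hz w hw hc' ?_ _ _ (hTz z hz) (hTz w hw)
      intro a i
      rw [← Real.dist_eq]
      exact ((dist_le_pi_dist (F z a) (F w a) i).trans (dist_le_pi_dist (F z) (F w) a)).trans_lt
        (hunif z hz w hw hd)
    simp only [lab, hc', hT]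
    rfl
end TVB

namespace TVB
open scoped BigOperators

theorem topTv' (r d : ℕ) (hr : IsPrimePow r) (N : ℕ) (hN : N = (d + 1) * (r - 1))
    (f : (Fin (N+1) → ℝ) → EuclideanSpace ℝ (Fin d)) (hf : Continuous f) :
    ∃ x : Fin r → (Fin (N+1) → ℝ), (∀ i, x i ∈ stdSimplex ℝ (Fin (N+1))) ∧
      (∀ i j, i ≠ j → ∀ k, x i k = 0 ∨ x j k = 0) ∧ ∀ i j, f (x i) = f (x j) := by
  rw [isPrimePow_nat_iff] at hr
  obtain ⟨p, k, hp, hk, rfl⟩ := hr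
  haveI : Fact p.Prime := ⟨hp⟩
  have hr0 : (0:ℝ) < ((p ^ k : ℕ) : ℝ) := by exact_mod_cast pow_pos hp.pos k
  let Φ : (Fin (N+1) → ℝ) → Fin (d+1) → ℝ :=
    fun u => Fin.cons (∑ j, u j) (fun i => f (((p ^ k : ℕ) : ℝ) • u) i)
  have hΦ : Continuous Φ := by
    refine continuous_pi fun i => ?_
    refine Fin.cases ?_ (fun i => ?_) i
    · simp only [Φ, Fin.cons_zero]; fun_prop
    · simp only [Φ, Fin.cons_succ]; fun_prop
  obtain ⟨h, z, ⟨hz1, hz2, hz3⟩, hz⟩ := topTv p k (d+1) hk (by omega) N hN Φ hΦ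
  have hcard : Fintype.card (Fin k → ZMod p) = p ^ k := by simp [ZMod.card]
  have hsum : ∀ a b, ∑ j, z j a = ∑ j, z j b := by
    intro a b
    have := congrFun (hz a b) 0
    simpa [Φ] using this
  have hsum1 : ∀ a, ((p ^ k : ℕ) : ℝ) * ∑ j, z j a = 1 := by
    intro a
    rw [Finset.sum_comm] at hz2
    rw [← hz2, Finset.sum_congr rfl (fun b _ => hsum b a), Finset.sum_const, Finset.card_univ, hcard,
      nsmul_eq_mul]
  let eA : Fin (p ^ k) ≃ (Fin k → ZMod p) := (finCongr hcard.symm).trans (Fintype.equivFin _).symm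
  refine ⟨fun i => ((p ^ k : ℕ) : ℝ) • fun j => z j (eA i), fun i => ⟨fun j => ?_, ?_⟩, ?_, ?_⟩
  · exact mul_nonneg hr0.le (hz1 j _)
  · simp only [Pi.smul_apply, smul_eq_mul, ← Finset.mul_sum, hsum1]
  · intro i j hij m
    by_contra hcon
    push Not at hcon
    apply hij
    apply eA.injective
    have aux : ∀ i, (((p ^ k : ℕ) : ℝ) • fun j => z j (eA i)) m ≠ 0 → eA i = h m := by
      intro i hi
      by_contra hne
      apply hi
      have := hz3 m (eA i) (fun hh => hne hh.1)
      simp [this]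
    rw [aux i hcon.1, aux j hcon.2]
  · intro i j
    ext m
    have := congrFun (hz (eA i) (eA j)) m.succ
    simpa [Φ] using this
end TVB

namespace TVB

theorem fm_cone {W : Type*} [AddCommGroup W] [Module ℝ W] [FiniteDimensional ℝ W]
    (S : Finset W) : ∃ H : Finset (Module.Dual ℝ W), ∀ x : W,
      (∃ c : W → ℝ, (∀ v ∈ S, 0 ≤ c v) ∧ x = ∑ v ∈ S, c v • v) ↔ ∀ h ∈ H, 0 ≤ h x := by
  classical
  induction S using Finset.induction_on with
  | empty =>
    let b := Module.finBasis ℝ W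
    refine ⟨(Finset.univ.image fun i => b.coord i) ∪ (Finset.univ.image fun i => -b.coord i), ?_⟩
    intro x
    constructor
    · rintro ⟨c, -, rfl⟩
      simp
    · intro h
      refine ⟨0, by simp, ?_⟩
      simp only [Finset.sum_empty]
      rw [← b.forall_coord_eq_zero_iff]
      intro i
      have h1 := h (b.coord i) (by simp)
      have h2 := h (-b.coord i) (by simp)
      rw [LinearMap.neg_apply] at h2
      linarith
  | insert v S hv ih =>
    obtain ⟨H, hH⟩ := ih
    refine ⟨(H.filter fun h => 0 ≤ h v) ∪
      (((H.filter fun h => 0 < h v) ×ˢ (H.filter fun h => h v < 0)).image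
        fun p => (p.1 v) • p.2 - (p.2 v) • p.1), ?_⟩
    intro x
    have key : (∃ c : W → ℝ, (∀ w ∈ insert v S, 0 ≤ c w) ∧ x = ∑ w ∈ insert v S, c w • w) ↔
        ∃ t : ℝ, 0 ≤ t ∧ ∀ h ∈ H, 0 ≤ h (x - t • v) := by
      constructor
      · rintro ⟨c, hc, hx⟩
        refine ⟨c v, hc v (by simp), (hH _).1 ⟨c, fun w hw => hc w (by simp [hw]), ?_⟩⟩
        rw [hx, Finset.sum_insert hv]; abel
      · rintro ⟨t, ht, h⟩
        obtain ⟨c, hc, hx⟩ := (hH _).2 h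
        refine ⟨Function.update c v t, ?_, ?_⟩
        · intro w hw
          by_cases e : w = v
          · subst e; simpa using ht
          · rw [Function.update_of_ne e]
            exact hc w ((Finset.mem_insert.1 hw).resolve_left e)
        · rw [Finset.sum_insert hv, Function.update_self]
          have : ∑ w ∈ S, Function.update c v t w • w = ∑ w ∈ S, c w • w := by
            refine Finset.sum_congr rfl fun w hw => ?_
            rw [Function.update_of_ne]
            rintro rfl; exact hv hw
          rw [this, ← hx]; abel
    rw [key]
    constructor
    · rintro ⟨t, ht, h⟩ g hg
      simp only [Finset.mem_union, Finset.mem_filter, Finset.mem_image, Finset.mem_product,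
        Prod.exists] at hg
      rcases hg with ⟨hg, hgv⟩ | ⟨p, q, ⟨⟨hp, hpv⟩, hq, hqv⟩, rfl⟩
      · have := h g hg
        simp only [map_sub, map_smul, smul_eq_mul] at this
        nlinarith [mul_nonneg ht hgv]
      · have h1 := h p hp
        have h2 := h q hq
        simp only [map_sub, map_smul, smul_eq_mul] at h1 h2
        simp only [LinearMap.sub_apply, LinearMap.smul_apply, smul_eq_mul]
        nlinarith [mul_nonneg hpv.le h2, mul_nonneg (neg_nonneg.2 hqv.le) h1]
    · intro h
      have h0 : ∀ g ∈ H, 0 ≤ g v → 0 ≤ g x := fun g hg hgv => h g (by simp [hg, hgv])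
      have h1 : ∀ p ∈ H, 0 < p v → ∀ q ∈ H, q v < 0 → 0 ≤ p v * q x - q v * p x := by
        intro p hp hpv q hq hqv
        have := h (p v • q - q v • p) (by
          refine Finset.mem_union_right _ (Finset.mem_image.2 ⟨(p, q), ?_, rfl⟩)
          simp [hp, hpv, hq, hqv])
        simpa using this
      obtain ⟨t, htm, ht⟩ := Finset.exists_max_image
        (insert 0 ((H.filter fun h => h v < 0).image fun q => q x / q v)) id (by simp)
      simp only [id] at ht
      refine ⟨t, ht 0 (by simp), fun g hg => ?_⟩
      simp only [map_sub, map_smul, smul_eq_mul]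
      rcases lt_trichotomy (g v) 0 with hgv | hgv | hgv
      · have := ht (g x / g v) (Finset.mem_insert_of_mem (Finset.mem_image.2 ⟨g, by simp [hg, hgv], rfl⟩))
        rw [div_le_iff_of_neg hgv] at this
        linarith
      · have := h0 g hg hgv.ge
        rw [hgv]; linarith
      · rcases Finset.mem_insert.1 htm with rfl | htm
        · have := h0 g hg hgv.le
          linarith
        · obtain ⟨q, hq, rfl⟩ := Finset.mem_image.1 htm
          obtain ⟨hq, hqv⟩ := Finset.mem_filter.1 hq
          have := h1 g hg hgv q hq hqv
          have e : g x - q x / q v * g v = (g v * q x - q v * g x) / (- q v) := by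
            have := hqv.ne
            field_simp
            ring
          rw [e]
          exact div_nonneg this (by linarith)

end TVB

namespace TVB

theorem partition_lemma {I : Type*} [DecidableEq I] (m : ℕ) : ∀ (S : Finset I)
    (A : Submodule ℝ (I → ℝ)) [FiniteDimensional ℝ A] (_ : Module.finrank ℝ A = m)
    (_ : ∀ a ∈ A, (∀ i ∈ S, a i = 0) → a = 0)
    (u : I → ℝ) (_ : u ∈ A) (_ : ∀ i ∈ S, 0 < u i),
    ∃ c : I → ℕ, S.image c = Finset.range m ∧ ∀ τ : ℕ → Prop, ∃ a ∈ A, ∀ i ∈ S,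
      (τ (c i) → 0 < a i) ∧ (¬ τ (c i) → a i < 0) := by
  classical
  induction m with
  | zero =>
    intro S A _ hA hinj u hu hpos
    have hA0 : A = ⊥ := Submodule.finrank_eq_zero.1 hA
    have hu0 : u = 0 := by simpa [hA0] using hu
    have hS : S = ∅ := by
      rw [Finset.eq_empty_iff_forall_notMem]
      intro i hi
      have := hpos i hi
      simp [hu0] at this
    subst hS
    exact ⟨fun _ => 0, by simp, fun τ => ⟨0, A.zero_mem, by simp⟩⟩
  | succ m ih =>
    intro S A _ hA hinj u hu hpos
    have hSne : S.Nonempty := by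
      rw [Finset.nonempty_iff_ne_empty]
      rintro rfl
      have : A = ⊥ := by
        rw [Submodule.eq_bot_iff]
        intro a ha
        exact hinj a ha (by simp)
      rw [this] at hA
      simp at hA
    let b := Module.finBasis ℝ A
    let e : I → Fin (Module.finrank ℝ A) → ℝ := fun i j => (b j : I → ℝ) i / u i
    obtain ⟨i0, hi0, hmax⟩ := Finset.exists_max_image S (fun i => ∑ j, e i j ^ 2) hSne
    have hui0 := hpos i0 hi0
    let g : I → ℝ := (∑ j, e i0 j ^ 2) • u - ∑ j, e i0 j • (b j : I → ℝ)
    have hgA : g ∈ A := by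
      refine A.sub_mem (A.smul_mem _ hu) (A.sum_mem fun j _ => A.smul_mem _ (b j).2)
    have hgi : ∀ i ∈ S, g i = u i * ((1/2) * ∑ j, (e i0 j - e i j) ^ 2 +
        (1/2) * (∑ j, e i0 j ^ 2 - ∑ j, e i j ^ 2)) := by
      intro i hi
      have hui := (hpos i hi).ne'
      have h1 : ∀ j, (b j : I → ℝ) i = u i * e i j := by
        intro j
        simp only [e]
        field_simp
      simp only [g, Pi.sub_apply, Pi.smul_apply, smul_eq_mul, Finset.sum_apply]
      simp_rw [h1]
      simp_rw [sub_sq, Finset.sum_add_distrib, Finset.sum_sub_distrib]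
      have h2 : ∑ j, e i0 j * (u i * e i j) = u i * ∑ j, e i0 j * e i j := by
        rw [Finset.mul_sum]
        exact Finset.sum_congr rfl fun j _ => by ring
      have h3 : ∑ j, 2 * e i0 j * e i j = 2 * ∑ j, e i0 j * e i j := by
        rw [Finset.mul_sum]
        exact Finset.sum_congr rfl fun j _ => by ring
      rw [h2, h3]
      ring
    have hg0 : ∀ i ∈ S, 0 ≤ g i := by
      intro i hi
      rw [hgi i hi]
      have := hmax i hi
      have h2 : 0 ≤ ∑ j, (e i0 j - e i j) ^ 2 := Finset.sum_nonneg fun j _ => sq_nonneg _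
      exact mul_nonneg (hpos i hi).le (by linarith)
    have hge : ∀ i ∈ S, g i = 0 → ∀ j, e i j = e i0 j := by
      intro i hi h0 j
      rw [hgi i hi] at h0
      have := hmax i hi
      have h2 : 0 ≤ ∑ j, (e i0 j - e i j) ^ 2 := Finset.sum_nonneg fun j _ => sq_nonneg _
      have h3 := (mul_eq_zero.1 h0).resolve_left (hpos i hi).ne'
      have h4 : ∑ j, (e i0 j - e i j) ^ 2 = 0 := by linarith
      have h5 := (Finset.sum_eq_zero_iff_of_nonneg (fun j _ => sq_nonneg _)).1 h4 j (by simp)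
      have h6 := pow_eq_zero_iff (two_ne_zero) |>.1 h5
      linarith
    have hgi0 : g i0 = 0 := by
      rw [hgi i0 hi0]; simp
    have hlin : ∀ i ∈ S, g i = 0 → ∀ a ∈ A, a i0 = 0 → a i = 0 := by
      intro i hi h0 a ha ha0
      have hui := (hpos i hi).ne'
      have hui0' := hui0.ne'
      have hrep : a = ∑ j, b.repr ⟨a, ha⟩ j • (b j : I → ℝ) := by
        have := congrArg (Subtype.val) (b.sum_repr ⟨a, ha⟩)
        rw [Submodule.coe_sum] at this
        exact this.symm
      have h1 : ∀ i ∈ S, a i = u i * ∑ j, b.repr ⟨a, ha⟩ j * e i j := by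
        intro i hi
        have hui := (hpos i hi).ne'
        conv_lhs => rw [hrep]
        simp only [Finset.sum_apply, Pi.smul_apply, smul_eq_mul, Finset.mul_sum, e]
        refine Finset.sum_congr rfl fun j _ => ?_
        field_simp
      rw [h1 i hi]
      rw [h1 i0 hi0] at ha0
      have h2 := (mul_eq_zero.1 ha0).resolve_left hui0'
      have h3 := hge i hi h0
      simp_rw [h3, h2, mul_zero]
    let A' : Submodule ℝ (I → ℝ) := A ⊓ LinearMap.ker (LinearMap.proj i0 : (I → ℝ) →ₗ[ℝ] ℝ)
    have hA'mem : ∀ a, a ∈ A' ↔ a ∈ A ∧ a i0 = 0 := by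
      intro a; simp [A', Submodule.mem_inf]
    let φ : A →ₗ[ℝ] ℝ := (LinearMap.proj i0 : (I → ℝ) →ₗ[ℝ] ℝ).comp A.subtype
    have hφ : Function.Surjective φ := by
      intro t
      refine ⟨(t / u i0) • ⟨u, hu⟩, ?_⟩
      simp [φ, hui0.ne']
    have hrank := LinearMap.finrank_range_add_finrank_ker φ
    rw [LinearMap.range_eq_top.2 hφ, finrank_top, Module.finrank_self, hA] at hrank
    have hmap : (LinearMap.ker φ).map A.subtype = A' := by
      ext a
      rw [hA'mem]
      simp [φ, and_comm]
    have : FiniteDimensional ℝ A' := Submodule.finiteDimensional_of_le (inf_le_left : A' ≤ A)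
    have hA'rank : Module.finrank ℝ A' = m := by
      rw [← hmap, Submodule.finrank_map_subtype_eq]
      omega
    let S' := S.filter fun i => g i ≠ 0
    obtain ⟨c', hc', hτ'⟩ := ih S' A' hA'rank (by
        intro a ha h
        rw [hA'mem] at ha
        refine hinj a ha.1 fun i hi => ?_
        by_cases hgi' : g i = 0
        · exact hlin i hi hgi' a ha.1 ha.2
        · exact h i (by simp [S', hi, hgi'])) g ((hA'mem g).2 ⟨hgA, hgi0⟩) (by
        intro i hi
        obtain ⟨h1, h2⟩ := Finset.mem_filter.1 hi
        exact lt_of_le_of_ne (hg0 i h1) (Ne.symm h2))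
    refine ⟨fun i => if g i = 0 then m else c' i, ?_, ?_⟩
    · ext k
      simp only [Finset.mem_image, Finset.mem_range]
      constructor
      · rintro ⟨i, hi, rfl⟩
        split_ifs with h
        · omega
        · have : c' i ∈ Finset.range m := by
            rw [← hc']; exact Finset.mem_image_of_mem _ (by simp [S', hi, h])
          have := Finset.mem_range.1 this
          omega
      · intro hk
        by_cases hkm : k = m
        · exact ⟨i0, hi0, by simp [hgi0, hkm]⟩
        · have : k ∈ S'.image c' := by
            rw [hc', Finset.mem_range]; omega
          obtain ⟨i, hi, rfl⟩ := Finset.mem_image.1 this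
          obtain ⟨h1, h2⟩ := Finset.mem_filter.1 hi
          exact ⟨i, h1, by simp [h2]⟩
    · intro τ
      obtain ⟨a', ha', hs⟩ := hτ' τ
      have ha'2 := (hA'mem a').1 ha'
      have hne : ∀ i ∈ S', 0 < |a' i| := by
        intro i hi
        rw [abs_pos]
        by_cases h : τ (c' i)
        · exact ((hs i hi).1 h).ne'
        · exact ((hs i hi).2 h).ne
      have hex : ∃ ε : ℝ, 0 < ε ∧ ∀ i ∈ S', ε * u i < |a' i| := by
        have h1 : ∀ᶠ ε : ℝ in nhdsWithin 0 (Set.Ioi 0), ∀ i ∈ S', ε * u i < |a' i| := by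
          rw [Filter.eventually_all_finset]
          intro i hi
          have : Filter.Tendsto (fun ε : ℝ => ε * u i) (nhdsWithin 0 (Set.Ioi 0)) (nhds (0 * u i)) :=
            ((continuous_id.mul continuous_const).tendsto 0).mono_left nhdsWithin_le_nhds
          rw [zero_mul] at this
          exact this.eventually (gt_mem_nhds (hne i hi))
        obtain ⟨ε, h2, h3⟩ := (h1.and self_mem_nhdsWithin).exists
        exact ⟨ε, h3, h2⟩
      obtain ⟨ε, hε, hεi⟩ := hex
      refine ⟨a' + (if τ m then ε else -ε) • u, A.add_mem ha'2.1 (A.smul_mem _ hu), ?_⟩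
      intro i hi
      simp only [Pi.add_apply, Pi.smul_apply, smul_eq_mul]
      have hui := hpos i hi
      have hεu := mul_pos hε hui
      by_cases hgi' : g i = 0
      · rw [if_pos hgi', hlin i hi hgi' a' ha'2.1 ha'2.2, zero_add]
        constructor
        · intro h; rw [if_pos h]; exact hεu
        · intro h; rw [if_neg h]; linarith
      · rw [if_neg hgi']
        have hi' : i ∈ S' := by simp [S', hi, hgi']
        have h1 := hεi i hi'
        constructor
        · intro h
          have h2 := (hs i hi').1 h
          rw [abs_of_pos h2] at h1
          split_ifs <;> linarith
        · intro h
          have h2 := (hs i hi').2 h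
          rw [abs_of_neg h2] at h1
          split_ifs <;> linarith

end TVB

namespace TVB

set_option linter.unusedSectionVars false

section push
variable {W : Type*} [NormedAddCommGroup W] [NormedSpace ℝ W] [FiniteDimensional ℝ W]

open Classical in
/-- The largest multiple of `v` that can be subtracted from `x` inside the cone given by `H`. -/
noncomputable def pushT (H : Finset (Module.Dual ℝ W)) (v x : W) : ℝ :=
  if hne : (H.filter fun h => 0 < h v).Nonempty then
    (H.filter fun h => 0 < h v).inf' hne fun h => h x / h v
  else 0

theorem pushT_continuous (H : Finset (Module.Dual ℝ W)) (v : W) :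
    Continuous fun x => pushT H v x := by
  classical
  unfold pushT
  split_ifs with hne
  · refine Continuous.finset_inf'_apply hne fun h _ => ?_
    exact (LinearMap.continuous_of_finiteDimensional h).div_const _
  · exact continuous_const

theorem pushT_nonneg (H : Finset (Module.Dual ℝ W)) (v x : W) (hx : ∀ h ∈ H, 0 ≤ h x) :
    0 ≤ pushT H v x := by
  classical
  unfold pushT
  split_ifs with hne
  · rw [Finset.le_inf'_iff]
    intro h hh
    obtain ⟨h1, h2⟩ := Finset.mem_filter.1 hh
    exact div_nonneg (hx h h1) h2.le
  · exact le_rfl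

theorem pushT_le (H : Finset (Module.Dual ℝ W)) (v x : W) (h : Module.Dual ℝ W) (hh : h ∈ H)
    (hv : 0 < h v) : pushT H v x * h v ≤ h x := by
  classical
  have hm : h ∈ H.filter fun h => 0 < h v := Finset.mem_filter.2 ⟨hh, hv⟩
  unfold pushT
  rw [dif_pos ⟨h, hm⟩, ← le_div_iff₀ hv]
  exact Finset.inf'_le (fun h => h x / h v) hm

theorem pushT_attained (H : Finset (Module.Dual ℝ W)) (v x : W) (hv : ∃ h ∈ H, 0 < h v) :
    ∃ h ∈ H, 0 < h v ∧ pushT H v x * h v = h x := by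
  classical
  obtain ⟨h, hh, hv⟩ := hv
  have hne : (H.filter fun h => 0 < h v).Nonempty := ⟨h, Finset.mem_filter.2 ⟨hh, hv⟩⟩
  obtain ⟨g, hg, he⟩ := Finset.exists_mem_eq_inf' hne fun h => h x / h v
  obtain ⟨h1, h2⟩ := Finset.mem_filter.1 hg
  refine ⟨g, h1, h2, ?_⟩
  unfold pushT
  rw [dif_pos hne, he, div_mul_cancel₀ _ h2.ne']

/-- Successively push `x` away from the generators in the list. -/
noncomputable def pushL (H : Finset (Module.Dual ℝ W)) (ρ : W → ℝ) (x : W) : List W → W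
  | [] => x
  | v :: l => pushL H ρ x l - (ρ v * pushT H v (pushL H ρ x l)) • v

theorem pushL_continuous {X : Type*} [TopologicalSpace X] (H : Finset (Module.Dual ℝ W))
    (ρ : X → W → ℝ) (hρ : ∀ v, Continuous fun t => ρ t v) (x : X → W) (hx : Continuous x)
    (l : List W) : Continuous fun t => pushL H (ρ t) (x t) l := by
  induction l with
  | nil => exact hx
  | cons v l ih =>
    simp only [pushL]
    exact ih.sub (((hρ v).mul ((pushT_continuous H v).comp ih)).smul continuous_const)

theorem pushL_spec (H : Finset (Module.Dual ℝ W)) (V : Finset W) (ρ : W → ℝ) (x : W)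
    (hVC : ∀ v ∈ V, ∀ h ∈ H, 0 ≤ h v) (hpos : ∀ v ∈ V, ∃ h ∈ H, 0 < h v)
    (hρ0 : ∀ v, 0 ≤ ρ v) (hρ1 : ∀ v, ρ v ≤ 1) (hx : ∀ h ∈ H, 0 ≤ h x)
    (l0 : Module.Dual ℝ W) (hl0 : 0 < l0 x) (hl : ∀ v ∈ V, ρ v = 0 ∨ l0 v < 0)
    (l : List W) (hlV : ∀ v ∈ l, v ∈ V) :
    (∀ h ∈ H, 0 ≤ h (pushL H ρ x l)) ∧ 0 < l0 (pushL H ρ x l) ∧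
      ∀ v ∈ l, ρ v = 1 → ∃ h ∈ H, h (pushL H ρ x l) = 0 ∧ 0 < h v := by
  induction l with
  | nil => exact ⟨hx, hl0, by simp⟩
  | cons v l ih =>
    obtain ⟨h1, h2, h3⟩ := ih fun w hw => hlV w (List.mem_cons_of_mem _ hw)
    have hv : v ∈ V := hlV v (by simp)
    simp only [pushL]
    set y := pushL H ρ x l
    have hT := pushT_nonneg H v y h1
    have hρT : 0 ≤ ρ v * pushT H v y := mul_nonneg (hρ0 v) hT
    have hnn : ∀ h ∈ H, 0 ≤ h (y - (ρ v * pushT H v y) • v) := by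
      intro h hh
      simp only [map_sub, map_smul, smul_eq_mul]
      rcases (hVC v hv h hh).eq_or_lt with e | hlt
      · rw [← e]; linarith [h1 h hh]
      · have := pushT_le H v y h hh hlt
        nlinarith [mul_nonneg hT hlt.le, hρ1 v, mul_nonneg (sub_nonneg.2 (hρ1 v)) (mul_nonneg hT hlt.le)]
    refine ⟨hnn, ?_, ?_⟩
    · simp only [map_sub, map_smul, smul_eq_mul]
      rcases hl v hv with e | hlt
      · rw [e]; linarith
      · nlinarith
    · intro w hw hρw
      rcases List.mem_cons.1 hw with rfl | hw
      · obtain ⟨h, hh, hhv, he⟩ := pushT_attained H w y (hpos w hv)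
        refine ⟨h, hh, ?_, hhv⟩
        simp only [map_sub, map_smul, smul_eq_mul]
        rw [hρw, one_mul, he, sub_self]
      · obtain ⟨h, hh, he, hhw⟩ := h3 w hw hρw
        refine ⟨h, hh, le_antisymm ?_ (hnn h hh), hhw⟩
        simp only [map_sub, map_smul, smul_eq_mul, he]
        have := mul_nonneg hρT (hVC v hv h hh)
        linarith

theorem exists_psi {n : ℕ} (H : Finset (Module.Dual ℝ W)) (V : Finset W)
    (hVC : ∀ v ∈ V, ∀ h ∈ H, 0 ≤ h v) (hpos : ∀ v ∈ V, ∃ h ∈ H, 0 < h v)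
    (c : W → Fin n) (hc : ∀ k, ∃ v ∈ V, c v = k)
    (hτ : ∀ τ : Fin n → Prop, ∃ l : Module.Dual ℝ W, ∀ v ∈ V,
      (τ (c v) → 0 < l v) ∧ (¬ τ (c v) → l v < 0)) :
    ∃ X : (Fin n → ℝ) → W, Continuous X ∧ ∀ p ∈ stdSimplex ℝ (Fin n),
      (∀ h ∈ H, 0 ≤ h (X p)) ∧ X p ≠ 0 ∧
      ∀ v ∈ V, p (c v) = 0 → ∃ h ∈ H, h (X p) = 0 ∧ 0 < h v := by
  choose w hwV hwc using hc
  set η : ℝ := 1 / ((n : ℝ) + 1) with hη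
  have hη0 : 0 < η := by positivity
  let ρ : (Fin n → ℝ) → W → ℝ := fun p v => max 0 (min 1 (1 - p (c v) / η))
  let x : (Fin n → ℝ) → W := fun p => ∑ k, max 0 (p k - η) • w k
  refine ⟨fun p => pushL H (ρ p) (x p) V.toList, ?_, ?_⟩
  · refine pushL_continuous H ρ (fun v => ?_) x ?_ _
    · simp only [ρ]; fun_prop
    · simp only [x]; fun_prop
  · intro p hp
    obtain ⟨l0, hl0⟩ := hτ fun k => η ≤ p k
    obtain ⟨k0, hk0⟩ : ∃ k, η < p k := by
      by_contra hcon
      push Not at hcon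
      have h1 : ∑ k, p k ≤ ∑ _k : Fin n, η := Finset.sum_le_sum fun k _ => hcon k
      rw [hp.2] at h1
      simp only [Finset.sum_const, Finset.card_univ, Fintype.card_fin, nsmul_eq_mul] at h1
      rw [hη, mul_one_div, le_div_iff₀ (by positivity)] at h1
      linarith
    have hterm : ∀ k, 0 ≤ max 0 (p k - η) * l0 (w k) := by
      intro k
      by_cases h : η ≤ p k
      · exact mul_nonneg (le_max_left _ _) ((hl0 (w k) (hwV k)).1 (by rw [hwc]; exact h)).le
      · rw [max_eq_left (by linarith), zero_mul]
    have hs := pushL_spec H V (ρ p) (x p) hVC hpos (fun v => le_max_left _ _)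
      (fun v => max_le zero_le_one (min_le_left _ _)) (by
        intro h hh
        simp only [x, map_sum, map_smul, smul_eq_mul]
        exact Finset.sum_nonneg fun k _ => mul_nonneg (le_max_left _ _) (hVC _ (hwV k) h hh))
      l0 (by
        simp only [x, map_sum, map_smul, smul_eq_mul]
        refine Finset.sum_pos' (fun k _ => hterm k) ⟨k0, Finset.mem_univ _, ?_⟩
        refine mul_pos (lt_max_of_lt_right (by linarith)) ((hl0 (w k0) (hwV k0)).1 ?_)
        rw [hwc]; exact hk0.le) (by
        intro v hv
        by_cases h : η ≤ p (c v)
        · left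
          have : 1 ≤ p (c v) / η := by rwa [le_div_iff₀ hη0, one_mul]
          simp only [ρ]
          rw [max_eq_left]
          exact (min_le_right _ _).trans (by linarith)
        · right; exact (hl0 v hv).2 h) V.toList (by simp)
    refine ⟨hs.1, ?_, ?_⟩
    · intro h0
      beta_reduce at h0
      have := hs.2.1
      rw [h0, map_zero] at this
      exact lt_irrefl _ this
    · intro v hv h0
      exact hs.2.2 v (by simpa using hv) (by simp [ρ, h0])

end push
end TVB

namespace TVB

theorem poly_psi {E : Type*} [NormedAddCommGroup E] [NormedSpace ℝ E] [FiniteDimensional ℝ E]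
    (N : ℕ) (hN : Module.finrank ℝ E = N) (V : Finset E) (P : Set E)
    (hP : P = convexHull ℝ (V : Set E)) (hintP : (interior P).Nonempty) :
    ∃ (ψ : (Fin (N+1) → ℝ) → E) (F : (Fin (N+1) → ℝ) → Set E),
      ContinuousOn ψ (stdSimplex ℝ (Fin (N+1))) ∧
      (∀ p ∈ stdSimplex ℝ (Fin (N+1)), (∃ k, p k = 0) →
        ψ p ∈ F p ∧ ψ p ∈ frontier P ∧ IsExposed ℝ P (F p) ∧ F p ≠ P) ∧
      (∀ p ∈ stdSimplex ℝ (Fin (N+1)), ∀ q ∈ stdSimplex ℝ (Fin (N+1)),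
        (∀ k, p k = 0 ∨ q k = 0) → F p ∩ F q = ∅) := by
  classical
  let lift : E → ℝ × E := fun v => (1, v)
  have hlift : Function.Injective lift := fun a b h => (Prod.ext_iff.1 h).2
  let V' : Finset (ℝ × E) := V.image lift
  obtain ⟨H, hH⟩ := fm_cone V'
  -- membership in P
  have hmemP : ∀ y, y ∈ P ↔ ∃ w : E → ℝ, (∀ v ∈ V, 0 ≤ w v) ∧ ∑ v ∈ V, w v = 1 ∧
      ∑ v ∈ V, w v • v = y := by
    intro y; rw [hP, Finset.mem_convexHull']
  have hcone : ∀ x : ℝ × E, (∀ h ∈ H, 0 ≤ h x) ↔ ∃ w : E → ℝ, (∀ v ∈ V, 0 ≤ w v) ∧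
      ∑ v ∈ V, w v = x.1 ∧ ∑ v ∈ V, w v • v = x.2 := by
    intro x
    rw [← hH]
    constructor
    · rintro ⟨c, hc, hx⟩
      refine ⟨fun v => c (lift v), fun v hv => hc _ (Finset.mem_image_of_mem _ hv), ?_, ?_⟩
      · rw [hx, Finset.sum_image (fun a _ b _ h => hlift h), Prod.fst_sum]
        simp [lift]
      · rw [hx, Finset.sum_image (fun a _ b _ h => hlift h), Prod.snd_sum]
        simp [lift]
    · rintro ⟨w, hw, h1, h2⟩
      refine ⟨fun z => w z.2, ?_, ?_⟩
      · intro z hz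
        obtain ⟨v, hv, rfl⟩ := Finset.mem_image.1 hz
        exact hw v hv
      · rw [Finset.sum_image (fun a _ b _ h => hlift h)]
        refine Prod.ext ?_ ?_
        · rw [Prod.fst_sum]; simp [lift, h1]
        · rw [Prod.snd_sum]; simp [lift, h2]
  have hPH : ∀ y, y ∈ P ↔ ∀ h ∈ H, 0 ≤ h (lift y) := by
    intro y; rw [hmemP, hcone]
  have hVP : ∀ v ∈ V, v ∈ P := by
    intro v hv; rw [hP]; exact subset_convexHull ℝ _ hv
  have hVC : ∀ v ∈ V', ∀ h ∈ H, 0 ≤ h v := by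
    intro z hz
    obtain ⟨v, hv, rfl⟩ := Finset.mem_image.1 hz
    exact (hPH v).1 (hVP v hv)
  have hht : ∀ x : ℝ × E, (∀ h ∈ H, 0 ≤ h x) → x ≠ 0 → 0 < x.1 := by
    intro x hx hne
    obtain ⟨w, hw, h1, h2⟩ := (hcone x).1 hx
    have h0 : 0 ≤ x.1 := by rw [← h1]; exact Finset.sum_nonneg hw
    refine lt_of_le_of_ne h0 fun h => hne ?_
    rw [← h1] at h
    have hz := (Finset.sum_eq_zero_iff_of_nonneg hw).1 h.symm
    refine Prod.ext ?_ ?_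
    · rw [← h1, ← h]; rfl
    · rw [← h2]; exact Finset.sum_eq_zero fun v hv => by rw [hz v hv, zero_smul]
  have hpos : ∀ v ∈ V', ∃ h ∈ H, 0 < h v := by
    intro z hz
    by_contra hcon
    push Not at hcon
    have h1 := hht (-z) (fun h hh => by rw [map_neg]; linarith [hcon h hh])
    obtain ⟨v, hv, rfl⟩ := Finset.mem_image.1 hz
    have h2 := h1 (fun h => by
      have := (Prod.ext_iff.1 h).1
      simp [lift] at this)
    simp [lift] at h2
    linarith
  -- functionals vanishing on the vertices
  have hvan : ∀ l : Module.Dual ℝ (ℝ × E), (∀ z ∈ V', l z = 0) → l = 0 := by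
    intro l hl
    have h1 : ∀ y ∈ P, l (lift y) = 0 := by
      intro y hy
      obtain ⟨c, hc, hx⟩ := (hH (lift y)).2 ((hPH y).1 hy)
      rw [hx, map_sum]
      exact Finset.sum_eq_zero fun v hv => by rw [map_smul, hl v hv, smul_zero]
    obtain ⟨p0, hp0⟩ := hintP
    have h2 : ∀ z : E, l (0, z) = 0 := by
      intro z
      have hcont : Continuous fun t : ℝ => p0 + t • z := by fun_prop
      have hev : ∀ᶠ t : ℝ in nhds 0, p0 + t • z ∈ interior P := by
        apply hcont.continuousAt.eventually_mem
        rw [zero_smul, add_zero]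
        exact isOpen_interior.mem_nhds hp0
      have hev2 : ∀ᶠ t : ℝ in nhdsWithin 0 (Set.Ioi 0), p0 + t • z ∈ interior P :=
        hev.filter_mono nhdsWithin_le_nhds
      obtain ⟨t, ht, ht0⟩ := (hev2.and self_mem_nhdsWithin).exists
      have e : lift (p0 + t • z) = lift p0 + t • ((0, z) : ℝ × E) := by
        simp [lift]
      have h3 := h1 _ (interior_subset ht)
      rw [e, map_add, h1 _ (interior_subset hp0), map_smul, zero_add, smul_eq_mul] at h3
      exact (mul_eq_zero.1 h3).resolve_left (ne_of_gt ht0)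
    ext z
    · have := h1 _ (interior_subset hp0)
      have e : lift p0 = (1, 0) + (0, p0) := by simp [lift]
      rw [e, map_add, h2, add_zero] at this
      simpa using this
    · simpa using h2 z
  let Φ : Module.Dual ℝ (ℝ × E) →ₗ[ℝ] ((ℝ × E) → ℝ) :=
    { toFun := fun l => ⇑l
      map_add' := fun _ _ => rfl
      map_smul' := fun _ _ => rfl }
  have hΦ : Function.Injective Φ := fun a b h => DFunLike.coe_injective h
  have hrk : Module.finrank ℝ (LinearMap.range Φ) = N + 1 := by
    rw [LinearMap.finrank_range_of_inj hΦ, Subspace.dual_finrank_eq, Module.finrank_prod,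
      Module.finrank_self, hN, add_comm]
  obtain ⟨c0, hc0, hτ0⟩ := partition_lemma (N+1) V' (LinearMap.range Φ) hrk (by
      rintro _ ⟨l, rfl⟩ h
      rw [hvan l h, map_zero]) (Φ (LinearMap.fst ℝ ℝ E)) ⟨_, rfl⟩ (by
      intro z hz
      obtain ⟨v, hv, rfl⟩ := Finset.mem_image.1 hz
      simp [Φ, lift])
  let c : ℝ × E → Fin (N+1) := fun z => if h : c0 z < N + 1 then ⟨c0 z, h⟩ else 0
  have hcc : ∀ z ∈ V', (c z : ℕ) = c0 z := by
    intro z hz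
    have : c0 z ∈ Finset.range (N+1) := by rw [← hc0]; exact Finset.mem_image_of_mem _ hz
    simp only [c]
    rw [dif_pos (Finset.mem_range.1 this)]
  have hcsurj : ∀ k, ∃ v ∈ V', c v = k := by
    intro k
    have : (k : ℕ) ∈ V'.image c0 := by rw [hc0, Finset.mem_range]; exact k.2
    obtain ⟨v, hv, h⟩ := Finset.mem_image.1 this
    exact ⟨v, hv, Fin.ext (by rw [hcc v hv, h])⟩
  obtain ⟨X, hX, hXs⟩ := exists_psi H V' hVC hpos c hcsurj (by
    intro τ
    obtain ⟨_, ⟨l, rfl⟩, h⟩ := hτ0 fun m => ∃ k : Fin (N+1), (k : ℕ) = m ∧ τ k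
    refine ⟨l, fun v hv => ?_⟩
    have hiff : (∃ k : Fin (N+1), (k : ℕ) = c0 v ∧ τ k) ↔ τ (c v) := by
      rw [← hcc v hv]
      constructor
      · rintro ⟨k, hk, h⟩
        rwa [← Fin.ext hk]
      · intro h; exact ⟨_, rfl, h⟩
    have := h v hv
    rw [hiff] at this
    exact this)
  let ψ : (Fin (N+1) → ℝ) → E := fun p => (X p).1⁻¹ • (X p).2
  let F : (Fin (N+1) → ℝ) → Set E := fun p =>
    {y | y ∈ P ∧ ∀ h ∈ H, h (X p) = 0 → h (lift y) = 0}
  have hXpos : ∀ p ∈ stdSimplex ℝ (Fin (N+1)), 0 < (X p).1 := fun p hp =>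
    hht _ (hXs p hp).1 (hXs p hp).2.1
  have hψl : ∀ p ∈ stdSimplex ℝ (Fin (N+1)), lift (ψ p) = (X p).1⁻¹ • X p := by
    intro p hp
    refine Prod.ext ?_ ?_
    · simp [lift, (hXpos p hp).ne']
    · simp [lift, ψ]
  have hψF : ∀ p ∈ stdSimplex ℝ (Fin (N+1)), ψ p ∈ F p := by
    intro p hp
    refine ⟨(hPH _).2 fun h hh => ?_, fun h hh h0 => ?_⟩
    · rw [hψl p hp, map_smul]
      exact mul_nonneg (inv_nonneg.2 (hXpos p hp).le) ((hXs p hp).1 h hh)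
    · rw [hψl p hp, map_smul, h0, smul_zero]
  have hsep : ∀ p ∈ stdSimplex ℝ (Fin (N+1)), ∀ v ∈ V, p (c (lift v)) = 0 → v ∉ F p := by
    intro p hp v hv h0 hF
    obtain ⟨h, hh, h1, h2⟩ := (hXs p hp).2.2 (lift v) (Finset.mem_image_of_mem _ hv) h0
    have := hF.2 h hh h1
    linarith
  refine ⟨ψ, F, ?_, ?_, ?_⟩
  · intro p hp
    have h1 : ContinuousAt (fun p => (X p).1⁻¹ • (X p).2) p :=
      ((continuous_fst.comp hX).continuousAt.inv₀ (hXpos p hp).ne').smul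
        (continuous_snd.comp hX).continuousAt
    exact h1.continuousWithinAt
  · rintro p hp ⟨k, hk⟩
    obtain ⟨z, hz, hzk⟩ := hcsurj k
    obtain ⟨v, hv, rfl⟩ := Finset.mem_image.1 hz
    have hvk : p (c (lift v)) = 0 := by rw [hzk, hk]
    have hvF := hsep p hp v hv hvk
    refine ⟨hψF p hp, ?_, ?_, ?_⟩
    · have hcl : IsClosed P := by
        rw [hP]; exact (V.finite_toSet.isCompact_convexHull ℝ).isClosed
      rw [hcl.frontier_eq]
      refine ⟨(hψF p hp).1, fun hi => ?_⟩
      obtain ⟨h, hh, h1, h2⟩ := (hXs p hp).2.2 (lift v) (Finset.mem_image_of_mem _ hv) hvk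
      have hcont : Continuous fun t : ℝ => ψ p + t • (ψ p - v) := by fun_prop
      have hev : ∀ᶠ t : ℝ in nhds 0, ψ p + t • (ψ p - v) ∈ interior P := by
        apply hcont.continuousAt.eventually_mem
        rw [zero_smul, add_zero]
        exact isOpen_interior.mem_nhds hi
      have hev2 : ∀ᶠ t : ℝ in nhdsWithin 0 (Set.Ioi 0), ψ p + t • (ψ p - v) ∈ interior P :=
        hev.filter_mono nhdsWithin_le_nhds
      obtain ⟨t, ht, ht0⟩ := (hev2.and self_mem_nhdsWithin).exists
      have e : lift (ψ p + t • (ψ p - v)) = lift (ψ p) + t • (lift (ψ p) - lift v) := by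
        simp [lift]
      have h3 := (hPH _).1 (interior_subset ht) h hh
      rw [e, map_add, map_smul, map_sub, (hψF p hp).2 h hh h1, zero_add, zero_sub, smul_eq_mul] at h3
      have : 0 < t * h (lift v) := mul_pos ht0 h2
      linarith
    · intro _
      let L : Module.Dual ℝ (ℝ × E) := ∑ h ∈ H.filter fun h => h (X p) = 0, h
      have hLv : ∀ z, L z = ∑ h ∈ H.filter (fun h => h (X p) = 0), h z := by
        intro z; simp [L, LinearMap.sum_apply]
      let M : E →ₗ[ℝ] ℝ := -(L.comp (LinearMap.inr ℝ ℝ E))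
      have hM : ∀ y, M y = L (1, 0) - L (lift y) := by
        intro y
        have e : lift y = (1, 0) + (0, y) := by simp [lift]
        rw [e, map_add]
        simp [M]
      have hL0 : ∀ y ∈ P, 0 ≤ L (lift y) := by
        intro y hy
        rw [hLv]
        exact Finset.sum_nonneg fun h hh => (hPH y).1 hy h (Finset.mem_filter.1 hh).1
      have hLF : ∀ y ∈ P, (L (lift y) = 0 ↔ y ∈ F p) := by
        intro y hy
        rw [hLv, Finset.sum_eq_zero_iff_of_nonneg
          (fun h hh => (hPH y).1 hy h (Finset.mem_filter.1 hh).1)]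
        constructor
        · intro h
          exact ⟨hy, fun g hg h0 => h g (Finset.mem_filter.2 ⟨hg, h0⟩)⟩
        · intro h g hg
          exact h.2 g (Finset.mem_filter.1 hg).1 (Finset.mem_filter.1 hg).2
      refine ⟨LinearMap.toContinuousLinearMap M, ?_⟩
      ext y
      simp only [LinearMap.coe_toContinuousLinearMap', hM]
      constructor
      · intro hy
        refine ⟨hy.1, fun z hz => ?_⟩
        have := (hLF y hy.1).2 hy
        have := hL0 z hz
        linarith
      · rintro ⟨hy, h⟩
        rw [← hLF y hy]
        have h1 := h _ (hψF p hp).1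
        have h2 := (hLF _ (hψF p hp).1).2 (hψF p hp)
        have := hL0 y hy
        linarith
    · intro he
      exact hvF (he ▸ hVP v hv)
  · intro p hp q hq hpq
    rw [Set.eq_empty_iff_forall_notMem]
    rintro y ⟨hyp, hyq⟩
    obtain ⟨w, hw, h1, h2⟩ := (hcone (lift y)).1 ((hPH y).1 hyp.1)
    obtain ⟨v, hv, hwv⟩ : ∃ v ∈ V, 0 < w v := by
      by_contra hcon
      push Not at hcon
      have : ∑ v ∈ V, w v ≤ 0 := Finset.sum_nonpos hcon
      rw [h1] at this
      simp [lift] at this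
      linarith
    have hy : lift y = ∑ v ∈ V, w v • lift v := by
      refine Prod.ext ?_ ?_
      · rw [Prod.fst_sum]; rw [← h1]; simp [lift]
      · rw [Prod.snd_sum]; rw [← h2]; simp [lift]
    have hin : ∀ p, y ∈ F p → v ∈ F p := by
      intro p hyp
      refine ⟨hVP v hv, fun h hh h0 => ?_⟩
      have h3 := hyp.2 h hh h0
      rw [hy, map_sum] at h3
      have h4 := (Finset.sum_eq_zero_iff_of_nonneg (fun u hu => by
        rw [map_smul]
        exact mul_nonneg (hw u hu) ((hPH u).1 (hVP u hu) h hh))).1 h3 v hv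
      rw [map_smul, smul_eq_mul] at h4
      exact (mul_eq_zero.1 h4).resolve_left hwv.ne'
    rcases hpq (c (lift v)) with h | h
    · exact hsep p hp v hv h (hin p hyp)
    · exact hsep q hq v hv h (hin q hyq)

end TVB

/-!
STATEMENT 11 (Tverberg theorem for boundaries of convex polytopes).
Let `r` be a prime power and `d ≥ 1`. The boundary complex of any convex polytope `P` of
dimension `(d+1)(r-1)` (a convex hull of a finite set in `ℝ^{(d+1)(r-1)}` with non-empty
interior) admits no almost `r`-embedding into `ℝ^d`: for every continuous map `f` from the
boundary of `P` to `ℝ^d` there are pairwise disjoint proper faces `σ 0, …, σ (r-1)` of `P`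
(non-empty exposed faces different from `P`) whose `f`-images have a common point.
-/
theorem tverberg_for_polytope_boundaries
    (r d : ℕ) (hr : IsPrimePow r) (hd : 1 ≤ d)
    (V : Finset (EuclideanSpace ℝ (Fin ((d + 1) * (r - 1)))))
    (P : Set (EuclideanSpace ℝ (Fin ((d + 1) * (r - 1)))))
    (hP : P = convexHull ℝ (V : Set (EuclideanSpace ℝ (Fin ((d + 1) * (r - 1))))))
    (hfull : (interior P).Nonempty)
    (f : ↥(frontier P) → EuclideanSpace ℝ (Fin d))
    (hf : Continuous f) :
    ∃ σ : Fin r → Set (EuclideanSpace ℝ (Fin ((d + 1) * (r - 1)))),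
      (∀ i, IsExposed ℝ P (σ i) ∧ (σ i).Nonempty ∧ σ i ≠ P) ∧
      (Pairwise fun i j => σ i ∩ σ j = ∅) ∧
      (⋂ i, f '' {x : ↥(frontier P) | (x : EuclideanSpace ℝ (Fin ((d + 1) * (r - 1)))) ∈ σ i}).Nonempty := by
  have hr2 : 2 ≤ r := hr.two_le
  obtain ⟨ψ, F, hψ, hF, hdis⟩ := TVB.poly_psi ((d + 1) * (r - 1)) (by simp) V P hP hfull
  let K : Set (Fin ((d + 1) * (r - 1) + 1) → ℝ) :=
    {p | p ∈ stdSimplex ℝ (Fin ((d + 1) * (r - 1) + 1)) ∧ ∃ k, p k = 0}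
  have hK : IsClosed K := by
    have h1 : K = stdSimplex ℝ (Fin ((d + 1) * (r - 1) + 1)) ∩
        ⋃ k, {p : Fin ((d + 1) * (r - 1) + 1) → ℝ | p k = 0} := by
      ext p; simp [K]
    rw [h1]
    refine (isClosed_stdSimplex _ _).inter (isClosed_iUnion_of_finite fun k => ?_)
    exact isClosed_eq (continuous_apply k) continuous_const
  let g : C(K, EuclideanSpace ℝ (Fin d)) :=
    { toFun := fun p => f ⟨ψ p.1, (hF p.1 p.2.1 p.2.2).2.1⟩
      continuous_toFun := by
        refine hf.comp (Continuous.subtype_mk ?_ _)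
        exact continuousOn_iff_continuous_restrict.1 (hψ.mono fun p hp => hp.1) }
  have := TietzeExtension.of_homeo (EuclideanSpace.equiv (Fin d) ℝ).toHomeomorph
  obtain ⟨G, hG⟩ := ContinuousMap.exists_restrict_eq hK g
  obtain ⟨x, hx, hxd, hxe⟩ := TVB.topTv' r d hr _ rfl G G.continuous
  have hz : ∀ i, ∃ k, x i k = 0 := by
    intro i
    obtain ⟨j, hj⟩ : ∃ j : Fin r, j ≠ i := by
      have : Nontrivial (Fin r) := Fin.nontrivial_iff_two_le.2 hr2
      exact exists_ne i
    have hne : ∃ k, x j k ≠ 0 := by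
      by_contra hcon
      push Not at hcon
      have := (hx j).2
      simp [hcon] at this
    obtain ⟨k, hk⟩ := hne
    exact ⟨k, (hxd j i hj k).resolve_left hk⟩
  have hGx : ∀ i, G (x i) = f ⟨ψ (x i), (hF (x i) (hx i) (hz i)).2.1⟩ := by
    intro i
    exact DFunLike.congr_fun hG ⟨x i, hx i, hz i⟩
  refine ⟨fun i => F (x i), fun i => ?_, fun i j hij => ?_, ?_⟩
  · have h := hF (x i) (hx i) (hz i)
    exact ⟨h.2.2.1, ⟨_, h.1⟩, h.2.2.2⟩
  · exact hdis _ (hx i) _ (hx j) (hxd i j hij)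
  · refine ⟨G (x ⟨0, by omega⟩), Set.mem_iInter.2 fun i => ?_⟩
    refine ⟨⟨ψ (x i), (hF (x i) (hx i) (hz i)).2.1⟩, (hF (x i) (hx i) (hz i)).1, ?_⟩
    rw [← hGx]
    exact hxe _ _
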